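/- arXiv:1109.3676 — 3 statements merged into one kernel-verified Lean document; each statement's English description precedes it below -/
import Mathlib

section
/- Assume condition (A-1) holds with index α = 2 and condition (A-3) holds. Then u(t) · φ'(t^{−1}) → 1 and u(t) · t · φ(t^{−1}) → 1 as t → 0+; that is, u(t) ∼ 1/φ'(t^{−1}) ∼ 1/(t φ(t^{−1})) as t → 0+. -/
open MeasureTheory Set Filter Topology

/-!
Two elementary facts combine.

A nonnegative concave function `φ` on `(0, ∞)` with slowly varying derivative `φ'` satisfies
`φ l ∼ l φ' l`: the relative error `e l = φ l / (l φ' l) - 1` is nonnegative, and the support line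
`φ (2 l) ≤ φ l + l φ' l` makes it contract under doubling,
`e (2 l) ≤ (q l / 2) e l + (q l - 1)` with `q l = φ' l / φ' (2 l) → 1`.

For a decreasing `u` with Laplace transform `U`, the substitution `w = exp (-l t)` turns `l U l` and
`2 l U (2 l)` into `∫ v` and `∫ 2 w v` over `(0, 1)`, where `v w = u (-log w / l)` is increasing.
Monotonicity bounds `v a` above and below by combinations of these two moments, and
`v (exp (-1)) = u (1 / l)`. If doubling `l` leaves `l U l` asymptotically unchanged, then both
bounds are asymptotic to `l U l`.

For `U = 1 / φ` the first fact supplies the doubling property required by the second.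
-/

section Contraction

variable {e a b : ℝ → ℝ} {r c ε L M : ℝ}

theorem le_add_pow_mul_of_contracting_dilation (hr : 1 < r) (hc : 0 ≤ c) (hε : 0 ≤ ε) (hL : 0 ≤ L)
    (hM : ∀ l ∈ Icc L (r * L), e l ≤ M)
    (hrec : ∀ l, L ≤ l → e (r * l) ≤ c * e l + (1 - c) * ε) (n : ℕ) :
    ∀ l ∈ Icc (r ^ n * L) (r ^ (n + 1) * L), e l ≤ ε + c ^ n * M := by
  have hr0 : 0 < r := one_pos.trans hr
  induction n with
  | zero =>
    intro l hl
    have := hM l (by simpa using hl)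
    linarith
  | succ n ih =>
    rintro l ⟨hl₁, hl₂⟩
    have hlower : r ^ n * L ≤ l / r := by
      rw [le_div_iff₀ hr0]
      rwa [mul_right_comm, ← pow_succ]
    have hupper : l / r ≤ r ^ (n + 1) * L := by
      rw [div_le_iff₀ hr0]
      rwa [mul_right_comm, ← pow_succ]
    have hLl : L ≤ l / r := (le_mul_of_one_le_left hL (one_le_pow₀ hr.le)).trans hlower
    calc e l = e (r * (l / r)) := by rw [mul_div_cancel₀ l hr0.ne']
      _ ≤ c * e (l / r) + (1 - c) * ε := hrec _ hLl
      _ ≤ c * (ε + c ^ n * M) + (1 - c) * ε := by gcongr; exact ih _ ⟨hlower, hupper⟩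
      _ = ε + c ^ (n + 1) * M := by ring

theorem eventually_le_of_contracting_dilation (hr : 1 < r) (hc : 0 ≤ c) (hc1 : c < 1) (hε : 0 < ε)
    (hL : 0 < L) (hbdd : BddAbove (e '' Icc L (r * L)))
    (hrec : ∀ l, L ≤ l → e (r * l) ≤ c * e l + (1 - c) * ε) :
    ∀ᶠ l in atTop, e l ≤ 2 * ε := by
  obtain ⟨M, hM⟩ := hbdd
  have hM' : ∀ l ∈ Icc L (r * L), e l ≤ max M 0 := fun l hl =>
    (hM (mem_image_of_mem e hl)).trans (le_max_left M 0)
  have hpow : Tendsto (fun n : ℕ => c ^ n * max M 0) atTop (𝓝 0) := by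
    simpa using (tendsto_pow_atTop_nhds_zero_of_lt_one hc hc1).mul_const (max M 0)
  obtain ⟨N, hN⟩ := (hpow.eventually_le_const hε).exists
  filter_upwards [eventually_ge_atTop (r ^ N * L)] with l hl
  have hNl : r ^ N ≤ l / L := (le_div_iff₀ hL).2 hl
  obtain ⟨n, hn, hn'⟩ := exists_nat_pow_near ((one_le_pow₀ hr.le).trans hNl) hr
  have hNn : N ≤ n :=
    Nat.lt_succ_iff.1 ((pow_lt_pow_iff_right₀ hr).1 (hNl.trans_lt hn'))
  calc e l ≤ ε + c ^ n * max M 0 :=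
        le_add_pow_mul_of_contracting_dilation hr hc hε.le hL.le hM' hrec n l
          ⟨(le_div_iff₀ hL).1 hn, ((div_lt_iff₀ hL).1 hn').le⟩
    _ ≤ ε + c ^ N * max M 0 := by
        gcongr ε + ?_ * _
        exact pow_le_pow_of_le_one hc hc1.le hNn
    _ ≤ 2 * ε := by linarith

theorem tendsto_zero_of_contracting_dilation (hr : 1 < r) (hc : c < 1)
    (ha : Tendsto a atTop (𝓝 c)) (hb : Tendsto b atTop (𝓝 0))
    (he : ∀ᶠ l in atTop, 0 ≤ e l) (hbdd : ∀ᶠ L in atTop, BddAbove (e '' Icc L (r * L)))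
    (hrec : ∀ᶠ l in atTop, e (r * l) ≤ a l * e l + b l) :
    Tendsto e atTop (𝓝 0) := by
  obtain ⟨k, hk, hk1⟩ := exists_between (max_lt hc one_pos)
  obtain ⟨hck, hk0⟩ := max_lt_iff.1 hk
  have heventually : ∀ ε, 0 < ε → ∀ᶠ l in atTop, e l ≤ 2 * ε := by
    intro ε hε
    have hrec' : ∀ᶠ l in atTop, e (r * l) ≤ k * e l + (1 - k) * ε := by
      filter_upwards [he, hrec, ha.eventually_le_const hck,
        hb.eventually_le_const (mul_pos (sub_pos.2 hk1) hε)] with l hel hl hal hbl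
      exact hl.trans (add_le_add (mul_le_mul_of_nonneg_right hal hel) hbl)
    obtain ⟨L, hL, hLbdd, hLrec⟩ :=
      ((eventually_gt_atTop 0).and (hbdd.and (eventually_forall_ge_atTop.2 hrec'))).exists
    exact eventually_le_of_contracting_dilation hr hk0.le hk1 hε hL hLbdd hLrec
  refine tendsto_order.2 ⟨fun x hx => he.mono fun l hl => hx.trans_le hl, fun x hx => ?_⟩
  filter_upwards [heventually (x / 3) (by positivity)] with l hl
  linarith

end Contraction

/-- `φ' x` is a supergradient of `φ : ℝ → ℝ` at each `x ∈ s`, relative to `s`: on `s`, the graph of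
`φ` lies below each of these support lines. For `φ` concave and differentiable on an open convex
set, the only choice is its derivative, which is the role `φ'` plays here. -/
def IsSupergradientOn (φ φ' : ℝ → ℝ) (s : Set ℝ) : Prop :=
  ∀ x ∈ s, ∀ y ∈ s, φ y ≤ φ x + φ' x * (y - x)

namespace IsSupergradientOn

variable {φ φ' : ℝ → ℝ} {l : ℝ}

theorem antitoneOn {s : Set ℝ} (h : IsSupergradientOn φ φ' s) : AntitoneOn φ' s := by
  intro x hx y hy hxy
  rcases hxy.eq_or_lt with rfl | hlt
  · exact le_rfl
  · have hprod : 0 ≤ (φ' x - φ' y) * (y - x) := by linarith [h x hx y hy, h y hy x hx]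
    exact sub_nonneg.1 (nonneg_of_mul_nonneg_left hprod (sub_pos.2 hlt))

theorem monotoneOn {s : Set ℝ} (h : IsSupergradientOn φ φ' s) (hφ' : ∀ x ∈ s, 0 ≤ φ' x) :
    MonotoneOn φ s := by
  intro x hx y hy hxy
  linarith [h y hy x hx, mul_nonneg (hφ' y hy) (sub_nonneg.2 hxy)]

section Nonneg

variable (h : IsSupergradientOn φ φ' (Ioi 0)) (hφ : ∀ l, 0 < l → 0 ≤ φ l)

include h hφ

theorem supergradient_nonneg (hl : 0 < l) : 0 ≤ φ' l := by
  by_contra! hneg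
  set y := l + (φ l + 1) / -φ' l with hy
  have hly : 0 < y := add_pos_of_pos_of_nonneg hl
    (div_nonneg (by linarith [hφ l hl]) (by linarith))
  have hline : φ' l * (y - l) = -(φ l + 1) := by
    rw [hy, add_sub_cancel_left, div_neg, mul_neg, mul_div_cancel₀ _ hneg.ne]
  linarith [h l hl y hly, hφ y hly]

theorem mul_supergradient_le (hl : 0 < l) : l * φ' l ≤ φ l := by
  have hlim : Tendsto (fun y => φ l + φ' l * (y - l)) (𝓝[>] 0) (𝓝 (φ l + φ' l * (0 - l))) :=
    tendsto_nhdsWithin_of_tendsto_nhds (Continuous.tendsto (by fun_prop) 0)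
  have hnonneg : 0 ≤ φ l + φ' l * (0 - l) := by
    refine ge_of_tendsto hlim ?_
    filter_upwards [self_mem_nhdsWithin] with y hy
    exact (hφ y hy).trans (h l hl y hy)
  linarith

variable (hsv : Tendsto (fun l => φ' (2 * l) / φ' l) atTop (𝓝 1))

include hsv

theorem supergradient_pos (hl : 0 < l) : 0 < φ' l := by
  obtain ⟨y, hy, hly⟩ := ((hsv.eventually_ne one_ne_zero).and (eventually_ge_atTop l)).exists
  have hy0 : 0 < y := hl.trans_le hly
  have hne : φ' y ≠ 0 := fun h0 => hy (by rw [h0, div_zero])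
  exact ((h.supergradient_nonneg hφ hy0).lt_of_ne' hne).trans_le (h.antitoneOn hl hy0 hly)

theorem pos (hl : 0 < l) : 0 < φ l :=
  (mul_pos hl (h.supergradient_pos hφ hsv hl)).trans_le (h.mul_supergradient_le hφ hl)

theorem div_mul_sub_one_two_mul_le (hl : 0 < l) :
    φ (2 * l) / (2 * l * φ' (2 * l)) - 1 ≤
      φ' l / φ' (2 * l) / 2 * (φ l / (l * φ' l) - 1) + (φ' l / φ' (2 * l) - 1) := by
  have hl2 : 0 < 2 * l := by positivity
  have hφ'l := h.supergradient_pos hφ hsv hl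
  have hφ'l2 := h.supergradient_pos hφ hsv hl2
  calc φ (2 * l) / (2 * l * φ' (2 * l)) - 1
      ≤ (φ l + φ' l * (2 * l - l)) / (2 * l * φ' (2 * l)) - 1 := by
        gcongr
        exact h l hl (2 * l) hl2
    _ = _ := by
        field_simp
        ring

theorem bddAbove_image_div_mul_sub_one {A B : ℝ} (hA : 0 < A) (hAB : A ≤ B) :
    BddAbove ((fun l => φ l / (l * φ' l) - 1) '' Icc A B) := by
  have hB : 0 < B := hA.trans_le hAB
  refine ⟨φ B / (A * φ' B) - 1, ?_⟩
  rintro _ ⟨l, ⟨hAl, hlB⟩, rfl⟩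
  have hl : 0 < l := hA.trans_le hAl
  have hφ'B := h.supergradient_pos hφ hsv hB
  have hφB := hφ B hB
  dsimp only
  gcongr
  · exact h.monotoneOn (fun _ hx => h.supergradient_nonneg hφ hx) hl hB hlB
  · exact h.antitoneOn hl hB hlB

theorem tendsto_div_mul : Tendsto (fun l => φ l / (l * φ' l)) atTop (𝓝 1) := by
  have hq : Tendsto (fun l => φ' l / φ' (2 * l)) atTop (𝓝 1) := by
    simpa using hsv.inv₀ one_ne_zero
  have hexcess : Tendsto (fun l => φ l / (l * φ' l) - 1) atTop (𝓝 0) := by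
    refine tendsto_zero_of_contracting_dilation one_lt_two (c := 1 / 2) (by norm_num)
      (hq.div_const 2) (by simpa using hq.sub_const 1) ?_ ?_ ?_
    · filter_upwards [eventually_gt_atTop 0] with l hl
      exact sub_nonneg.2
        ((one_le_div (mul_pos hl (h.supergradient_pos hφ hsv hl))).2 (h.mul_supergradient_le hφ hl))
    · filter_upwards [eventually_gt_atTop 0] with L hL
      exact h.bddAbove_image_div_mul_sub_one hφ hsv hL (by linarith)
    · filter_upwards [eventually_gt_atTop 0] with l hl
      exact h.div_mul_sub_one_two_mul_le hφ hsv hl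
  simpa using hexcess.add_const 1

theorem tendsto_div_two_mul : Tendsto (fun l => φ l / φ (2 * l)) atTop (𝓝 (1 / 2)) := by
  have hratio := h.tendsto_div_mul hφ hsv
  have hratio2 := hratio.comp (tendsto_id.const_mul_atTop two_pos)
  have hlim := ((hratio.div hratio2 one_ne_zero).div hsv one_ne_zero).div_const 2
  rw [div_one, div_one] at hlim
  refine hlim.congr' ?_
  filter_upwards [eventually_gt_atTop 0] with l hl
  have hl2 : 0 < 2 * l := by positivity
  have hφ'l := h.supergradient_pos hφ hsv hl
  have hφ'l2 := h.supergradient_pos hφ hsv hl2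
  have hφl2 := h.pos hφ hsv hl2
  simp only [Pi.div_apply, Function.comp_apply, id_eq]
  rw [mul_comm 2 l] at hφ'l2 hφl2 ⊢
  field_simp

end Nonneg

end IsSupergradientOn

section MonotoneMoments

variable {v : ℝ → ℝ} {a : ℝ}

theorem integral_two_mul_sub_mul_const (a x y k : ℝ) :
    ∫ w in x..y, (2 * w - a) * k = (y ^ 2 - x ^ 2 - a * (y - x)) * k := by
  rw [intervalIntegral.integral_mul_const,
    intervalIntegral.integral_sub (Continuous.intervalIntegrable (by fun_prop) _ _)
      (Continuous.intervalIntegrable (by fun_prop) _ _),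
    intervalIntegral.integral_const_mul, integral_id, intervalIntegral.integral_const,
    smul_eq_mul]
  ring

-- The weight `2 w - a` changes sign at `a / 2` and integrates to `0` over `(0, a)`.
theorem mul_le_integral_sub_mul_of_monotoneOn (hv : MonotoneOn v (Ioo 0 1))
    (hint : IntervalIntegrable v volume 0 1) (ha : a ∈ Ioo (0 : ℝ) 1) :
    (1 - a) * v a ≤ ∫ w in 0..1, (2 * w - a) * v w := by
  obtain ⟨ha0, ha1⟩ := ha
  have hweighted : IntervalIntegrable (fun w => (2 * w - a) * v w) volume 0 1 :=
    hint.continuousOn_mul (by fun_prop)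
  have hmem : a ∈ uIcc (0 : ℝ) 1 := mem_uIcc_of_le ha0.le ha1.le
  have hleft := hweighted.mono_set (uIcc_subset_uIcc_left hmem)
  have hright := hweighted.mono_set (uIcc_subset_uIcc_right hmem)
  have hhalf : a / 2 ∈ Ioo (0 : ℝ) 1 := ⟨by linarith, by linarith⟩
  have hbelow : ∫ w in 0..a, (2 * w - a) * v (a / 2) ≤ ∫ w in 0..a, (2 * w - a) * v w := by
    refine intervalIntegral.integral_mono_on_of_le_Ioo ha0.le
      (Continuous.intervalIntegrable (by fun_prop) _ _) hleft fun w hw => ?_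
    have hw' : w ∈ Ioo (0 : ℝ) 1 := ⟨hw.1, hw.2.trans ha1⟩
    rcases le_total w (a / 2) with hwa | hwa
    · exact mul_le_mul_of_nonpos_left (hv hw' hhalf hwa) (by linarith)
    · exact mul_le_mul_of_nonneg_left (hv hhalf hw' hwa) (by linarith)
  have habove : ∫ w in a..1, (2 * w - a) * v a ≤ ∫ w in a..1, (2 * w - a) * v w := by
    refine intervalIntegral.integral_mono_on_of_le_Ioo ha1.le
      (Continuous.intervalIntegrable (by fun_prop) _ _) hright fun w hw => ?_
    exact mul_le_mul_of_nonneg_left (hv ⟨ha0, ha1⟩ ⟨ha0.trans hw.1, hw.2⟩ hw.1.le)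
      (by linarith [hw.1])
  rw [integral_two_mul_sub_mul_const] at hbelow habove
  rw [← intervalIntegral.integral_add_adjacent_intervals hleft hright]
  linarith

-- The previous bound for the reflected function `w ↦ -v (1 - w)` at `1 - a`.
theorem integral_sub_mul_le_mul_of_monotoneOn (hv : MonotoneOn v (Ioo 0 1))
    (hint : IntervalIntegrable v volume 0 1) (ha : a ∈ Ioo (0 : ℝ) 1) :
    ∫ w in 0..1, (1 + a - 2 * w) * v w ≤ a * v a := by
  have hreflect : ∀ {w : ℝ}, w ∈ Ioo (0 : ℝ) 1 → 1 - w ∈ Ioo (0 : ℝ) 1 :=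
    fun hw => ⟨by linarith [hw.2], by linarith [hw.1]⟩
  have hv' : MonotoneOn (fun w => -v (1 - w)) (Ioo 0 1) := fun x hx y hy hxy =>
    neg_le_neg (hv (hreflect hy) (hreflect hx) (by linarith))
  have hint' : IntervalIntegrable (fun w => -v (1 - w)) volume 0 1 := by
    simpa [Pi.neg_def] using (hint.comp_sub_left 1).symm.neg
  have hbound := mul_le_integral_sub_mul_of_monotoneOn hv' hint' (hreflect ha)
  have hsubst : ∫ w in 0..1, (2 * w - (1 - a)) * -v (1 - w) =
      ∫ w in 0..1, -((1 + a - 2 * w) * v w) := by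
    have := intervalIntegral.integral_comp_sub_left (a := 0) (b := 1)
      (fun w => -((1 + a - 2 * w) * v w)) 1
    rw [sub_self, sub_zero] at this
    rw [← this]
    congr 1
    funext w
    ring
  rw [hsubst, intervalIntegral.integral_neg, sub_sub_cancel] at hbound
  linarith

end MonotoneMoments

/-- The Laplace transform of a function on `(0, ∞)`; it is `0` by convention where the integral
diverges. -/
noncomputable def laplaceTransform (u : ℝ → ℝ) (l : ℝ) : ℝ :=
  ∫ t in Ioi (0 : ℝ), Real.exp (-(l * t)) * u t

section Tauberian

variable {u : ℝ → ℝ} {l t : ℝ}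

theorem integrableOn_exp_mul_of_laplaceTransform_ne_zero (h : laplaceTransform u l ≠ 0) :
    IntegrableOn (fun t => Real.exp (-(l * t)) * u t) (Ioi 0) :=
  not_imp_comm.1 integral_undef h

theorem image_exp_neg_mul_Ioi (hl : 0 < l) :
    (fun t => Real.exp (-(l * t))) '' Ioi 0 = Ioo 0 1 := by
  ext w
  constructor
  · rintro ⟨t, ht, rfl⟩
    exact ⟨Real.exp_pos _, Real.exp_lt_one_iff.2 (neg_neg_of_pos (mul_pos hl ht))⟩
  · rintro ⟨hw0, hw1⟩
    refine ⟨-Real.log w / l, div_pos (neg_pos.2 (Real.log_neg hw0 hw1)) hl, ?_⟩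
    dsimp only
    rw [mul_div_cancel₀ _ hl.ne', neg_neg, Real.exp_log hw0]

theorem hasDerivWithinAt_exp_neg_mul (s : Set ℝ) :
    HasDerivWithinAt (fun t => Real.exp (-(l * t))) (-(l * Real.exp (-(l * t)))) s t := by
  have := ((hasDerivAt_id t).const_mul l).neg.exp
  simpa [mul_comm] using this.hasDerivWithinAt

theorem antitone_exp_neg_mul (hl : 0 ≤ l) : Antitone fun t => Real.exp (-(l * t)) :=
  fun _ _ hst => Real.exp_le_exp.2 (neg_le_neg (mul_le_mul_of_nonneg_left hst hl))

theorem intervalIntegrable_iff_integrableOn_exp_mul (hl : 0 < l) (g : ℝ → ℝ) :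
    IntervalIntegrable g volume 0 1 ↔
      IntegrableOn (fun t => l * Real.exp (-(l * t)) * g (Real.exp (-(l * t)))) (Ioi 0) := by
  have := integrableOn_image_iff_integrableOn_deriv_smul_of_antitoneOn measurableSet_Ioi
    (fun t _ => hasDerivWithinAt_exp_neg_mul (l := l) (t := t) (Ioi 0))
    ((antitone_exp_neg_mul hl.le).antitoneOn _) g
  rw [intervalIntegrable_iff_integrableOn_Ioo_of_le zero_le_one, ← image_exp_neg_mul_Ioi hl, this]
  simp only [neg_neg, smul_eq_mul]

theorem intervalIntegral_eq_integral_exp_mul (hl : 0 < l) (g : ℝ → ℝ) :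
    ∫ w in 0..1, g w =
      ∫ t in Ioi (0 : ℝ), l * Real.exp (-(l * t)) * g (Real.exp (-(l * t))) := by
  have := integral_image_eq_integral_deriv_smul_of_antitoneOn measurableSet_Ioi
    (fun t _ => hasDerivWithinAt_exp_neg_mul (l := l) (t := t) (Ioi 0))
    ((antitone_exp_neg_mul hl.le).antitoneOn _) g
  rw [intervalIntegral.integral_of_le zero_le_one, integral_Ioc_eq_integral_Ioo,
    ← image_exp_neg_mul_Ioi hl, this]
  simp only [neg_neg, smul_eq_mul]

theorem neg_log_exp_neg_mul_div (hl : l ≠ 0) : -Real.log (Real.exp (-(l * t))) / l = t := by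
  rw [Real.log_exp, neg_neg, mul_div_cancel_left₀ t hl]

theorem monotoneOn_comp_neg_log_div (hu : AntitoneOn u (Ioi 0)) (hl : 0 < l) :
    MonotoneOn (fun w => u (-Real.log w / l)) (Ioo 0 1) := by
  have hmem : ∀ w ∈ Ioo (0 : ℝ) 1, -Real.log w / l ∈ Ioi 0 := fun w hw =>
    div_pos (neg_pos.2 (Real.log_neg hw.1 hw.2)) hl
  intro x hx y hy hxy
  refine hu (hmem y hy) (hmem x hx) ?_
  gcongr
  exact hx.1

theorem intervalIntegrable_comp_neg_log_div (hl : 0 < l) (hU : laplaceTransform u l ≠ 0) :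
    IntervalIntegrable (fun w => u (-Real.log w / l)) volume 0 1 := by
  rw [intervalIntegrable_iff_integrableOn_exp_mul hl]
  simp only [neg_log_exp_neg_mul_div hl.ne', mul_assoc]
  exact (integrableOn_exp_mul_of_laplaceTransform_ne_zero hU).const_mul l

theorem intervalIntegral_affine_mul_comp_neg_log_div (hl : 0 < l) (hU : laplaceTransform u l ≠ 0)
    (hU2 : laplaceTransform u (2 * l) ≠ 0) (p q : ℝ) :
    ∫ w in 0..1, (p * (2 * w) + q) * u (-Real.log w / l) =
      p * (2 * l * laplaceTransform u (2 * l)) + q * (l * laplaceTransform u l) := by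
  have hsquare : ∀ t, Real.exp (-(2 * l * t)) = Real.exp (-(l * t)) * Real.exp (-(l * t)) := by
    intro t
    rw [← Real.exp_add]
    ring_nf
  have hsplit : ∀ t, l * Real.exp (-(l * t)) * ((p * (2 * Real.exp (-(l * t))) + q) * u t) =
      p * (2 * l) * (Real.exp (-(2 * l * t)) * u t) + q * l * (Real.exp (-(l * t)) * u t) := by
    intro t
    rw [hsquare]
    ring
  rw [intervalIntegral_eq_integral_exp_mul hl]
  simp only [neg_log_exp_neg_mul_div hl.ne', hsplit]
  rw [integral_add ((integrableOn_exp_mul_of_laplaceTransform_ne_zero hU2).const_mul _)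
      ((integrableOn_exp_mul_of_laplaceTransform_ne_zero hU).const_mul _),
    integral_const_mul, integral_const_mul]
  simp only [laplaceTransform, mul_assoc]

theorem one_sub_exp_mul_le_laplaceTransform (hu : AntitoneOn u (Ioi 0)) (hl : 0 < l)
    (ht : 0 < t) (hU : laplaceTransform u l ≠ 0) (hU2 : laplaceTransform u (2 * l) ≠ 0) :
    (1 - Real.exp (-(l * t))) * u t ≤
      2 * l * laplaceTransform u (2 * l) - Real.exp (-(l * t)) * (l * laplaceTransform u l) := by
  have hbound := mul_le_integral_sub_mul_of_monotoneOn (monotoneOn_comp_neg_log_div hu hl)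
    (intervalIntegrable_comp_neg_log_div hl hU)
    (image_exp_neg_mul_Ioi hl ▸ mem_image_of_mem _ (mem_Ioi.2 ht))
  have hmoment :=
    intervalIntegral_affine_mul_comp_neg_log_div hl hU hU2 1 (-Real.exp (-(l * t)))
  simp only [one_mul, ← sub_eq_add_neg, neg_mul] at hmoment
  rwa [hmoment, neg_log_exp_neg_mul_div hl.ne'] at hbound

theorem laplaceTransform_le_exp_mul (hu : AntitoneOn u (Ioi 0)) (hl : 0 < l)
    (ht : 0 < t) (hU : laplaceTransform u l ≠ 0) (hU2 : laplaceTransform u (2 * l) ≠ 0) :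
    (1 + Real.exp (-(l * t))) * (l * laplaceTransform u l) - 2 * l * laplaceTransform u (2 * l) ≤
      Real.exp (-(l * t)) * u t := by
  have hbound := integral_sub_mul_le_mul_of_monotoneOn (monotoneOn_comp_neg_log_div hu hl)
    (intervalIntegrable_comp_neg_log_div hl hU)
    (image_exp_neg_mul_Ioi hl ▸ mem_image_of_mem _ (mem_Ioi.2 ht))
  have hmoment :=
    intervalIntegral_affine_mul_comp_neg_log_div hl hU hU2 (-1) (1 + Real.exp (-(l * t)))
  simp only [neg_one_mul, neg_add_eq_sub] at hmoment
  rwa [hmoment, neg_log_exp_neg_mul_div hl.ne'] at hbound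

theorem tendsto_div_laplaceTransform_of_antitoneOn (hu : AntitoneOn u (Ioi 0))
    (hpos : ∀ l, 0 < l → 0 < laplaceTransform u l)
    (hratio : Tendsto (fun l => laplaceTransform u (2 * l) / laplaceTransform u l) atTop
      (𝓝 (1 / 2))) :
    Tendsto (fun l => u l⁻¹ / (l * laplaceTransform u l)) atTop (𝓝 1) := by
  set a := Real.exp (-1) with ha
  have ha0 : 0 < a := Real.exp_pos _
  have ha1 : 0 < 1 - a := sub_pos.2 (Real.exp_lt_one_iff.2 (by norm_num))
  have hF : Tendsto (fun l => 2 * (laplaceTransform u (2 * l) / laplaceTransform u l)) atTop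
      (𝓝 1) := by
    simpa using hratio.const_mul 2
  have hlower := (hF.const_sub (1 + a)).div_const a
  have hupper := (hF.sub_const a).div_const (1 - a)
  rw [add_sub_cancel_left, div_self ha0.ne'] at hlower
  rw [div_self ha1.ne'] at hupper
  refine tendsto_of_tendsto_of_tendsto_of_le_of_le' hlower hupper ?_ ?_ <;>
    filter_upwards [eventually_gt_atTop 0] with l hl <;>
    have hU := hpos l hl <;>
    have hU2 := hpos (2 * l) (by positivity)
  · have hbound := laplaceTransform_le_exp_mul hu hl (inv_pos.2 hl) hU.ne' hU2.ne'
    rw [mul_inv_cancel₀ hl.ne', ← ha] at hbound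
    rw [div_le_div_iff₀ ha0 (by positivity)]
    calc _ = (1 + a) * (l * laplaceTransform u l) - 2 * l * laplaceTransform u (2 * l) := by
          field_simp
      _ ≤ _ := by linarith
  · have hbound := one_sub_exp_mul_le_laplaceTransform hu hl (inv_pos.2 hl) hU.ne' hU2.ne'
    rw [mul_inv_cancel₀ hl.ne', ← ha] at hbound
    rw [div_le_div_iff₀ (by positivity) ha1]
    calc _ ≤ 2 * l * laplaceTransform u (2 * l) - a * (l * laplaceTransform u l) := by linarith
      _ = _ := by field_simp

end Tauberian

theorem potential_density_asymp_alpha_two_general {φ φ' u : ℝ → ℝ}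
    (hφ' : IsSupergradientOn φ φ' (Ioi 0)) (hφ : ∀ l, 0 < l → 0 ≤ φ l)
    (hsv : Tendsto (fun l => φ' (2 * l) / φ' l) atTop (𝓝 1))
    (hu : AntitoneOn u (Ioi 0)) (hU : ∀ l, 0 < l → laplaceTransform u l = 1 / φ l) :
    Tendsto (fun t => u t * φ' t⁻¹) (𝓝[>] 0) (𝓝 1) ∧
      Tendsto (fun t => u t * t * φ t⁻¹) (𝓝[>] 0) (𝓝 1) := by
  have hφpos : ∀ l, 0 < l → 0 < φ l := fun l hl => hφ'.pos hφ hsv hl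
  have hU2 : Tendsto (fun l => laplaceTransform u (2 * l) / laplaceTransform u l) atTop
      (𝓝 (1 / 2)) := by
    refine (hφ'.tendsto_div_two_mul hφ hsv).congr' ?_
    filter_upwards [eventually_gt_atTop 0] with l hl
    rw [hU l hl, hU (2 * l) (by positivity), div_div_div_eq, one_mul, mul_one]
  have hlim := tendsto_div_laplaceTransform_of_antitoneOn hu
    (fun l hl => hU l hl ▸ one_div_pos.2 (hφpos l hl)) hU2
  have hφlim : Tendsto (fun l => u l⁻¹ * l⁻¹ * φ l) atTop (𝓝 1) := by
    refine hlim.congr' ?_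
    filter_upwards [eventually_gt_atTop 0] with l hl
    have := hφpos l hl
    rw [hU l hl]
    field_simp
  have hφ'lim : Tendsto (fun l => u l⁻¹ * φ' l) atTop (𝓝 1) := by
    have hquot := hφlim.div (hφ'.tendsto_div_mul hφ hsv) one_ne_zero
    rw [div_one] at hquot
    refine hquot.congr' ?_
    filter_upwards [eventually_gt_atTop 0] with l hl
    have := hφpos l hl
    have := hφ'.supergradient_pos hφ hsv hl
    simp only [Pi.div_apply]
    field_simp
  exact ⟨by simpa [Function.comp_def] using hφ'lim.comp tendsto_inv_nhdsGT_zero,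
    by simpa [Function.comp_def] using hφlim.comp tendsto_inv_nhdsGT_zero⟩

section LevyDensity

variable {μ : ℝ → ℝ} {l : ℝ} (hμint : IntegrableOn (fun t => min 1 t * μ t) (Ioi 0))

include hμint

theorem integrableOn_mul_of_abs_le_mul_min {g : ℝ → ℝ} {C : ℝ} (hg : Measurable g)
    (hgC : ∀ t, 0 < t → |g t| ≤ C * min 1 t) : IntegrableOn (fun t => g t * μ t) (Ioi 0) := by
  have hquot : IntegrableOn (fun t => g t / min 1 t * (min 1 t * μ t)) (Ioi 0) := by
    refine hμint.bdd_mul (c := C)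
      (hg.div (measurable_const.min measurable_id)).aestronglyMeasurable ?_
    filter_upwards [ae_restrict_mem measurableSet_Ioi] with t ht
    have hmin : 0 < min 1 t := lt_min one_pos ht
    rw [Real.norm_eq_abs, abs_div, abs_of_pos hmin]
    exact (div_le_iff₀ hmin).2 (hgC t ht)
  refine hquot.congr_fun (fun t ht => ?_) measurableSet_Ioi
  have hmin : 0 < min 1 t := lt_min one_pos ht
  dsimp only
  rw [← mul_assoc, div_mul_cancel₀ _ hmin.ne']

theorem integrableOn_one_sub_exp_mul (hl : 0 < l) :
    IntegrableOn (fun t => (1 - Real.exp (-(l * t))) * μ t) (Ioi 0) := by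
  refine integrableOn_mul_of_abs_le_mul_min (C := max 1 l) hμint (by fun_prop) fun t ht => ?_
  have hexp : Real.exp (-(l * t)) ≤ 1 := Real.exp_le_one_iff.2 (by nlinarith)
  rw [abs_of_nonneg (sub_nonneg.2 hexp)]
  rcases le_total 1 t with h1t | ht1
  · rw [min_eq_left h1t, mul_one]
    linarith [Real.exp_pos (-(l * t)), le_max_left 1 l]
  · rw [min_eq_right ht1]
    nlinarith [Real.add_one_le_exp (-(l * t)), le_max_right 1 l]

theorem integrableOn_mul_exp_mul (hl : 0 < l) :
    IntegrableOn (fun t => t * Real.exp (-(l * t)) * μ t) (Ioi 0) := by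
  refine integrableOn_mul_of_abs_le_mul_min (C := max 1 l⁻¹) hμint (by fun_prop) fun t ht => ?_
  rw [abs_of_nonneg (by positivity)]
  rcases le_total 1 t with h1t | ht1
  · rw [min_eq_left h1t, mul_one]
    refine le_max_of_le_right ?_
    rw [Real.exp_neg, ← div_eq_mul_inv, div_le_iff₀ (Real.exp_pos _), inv_mul_eq_div,
      le_div_iff₀ hl]
    linarith [Real.add_one_le_exp (l * t)]
  · rw [min_eq_right ht1, mul_comm]
    have hexp : Real.exp (-(l * t)) ≤ 1 := Real.exp_le_one_iff.2 (by nlinarith)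
    gcongr
    exact hexp.trans (le_max_left _ _)

theorem isSupergradientOn_integral_one_sub_exp (hμ : ∀ t, 0 < t → 0 ≤ μ t) :
    IsSupergradientOn (fun l => ∫ t in Ioi (0 : ℝ), (1 - Real.exp (-(l * t))) * μ t)
      (fun l => ∫ t in Ioi (0 : ℝ), t * Real.exp (-(l * t)) * μ t) (Ioi 0) := by
  intro x hx y hy
  have hφx := integrableOn_one_sub_exp_mul hμint hx
  have hφ'x := (integrableOn_mul_exp_mul hμint hx).mul_const (y - x)
  dsimp only
  rw [← integral_mul_const, ← integral_add hφx hφ'x]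
  refine setIntegral_mono_on (integrableOn_one_sub_exp_mul hμint hy) (hφx.add hφ'x)
    measurableSet_Ioi fun t ht => ?_
  have htangent : Real.exp (-(x * t)) * (-((y - x) * t) + 1) ≤ Real.exp (-(y * t)) := by
    calc Real.exp (-(x * t)) * (-((y - x) * t) + 1)
        ≤ Real.exp (-(x * t)) * Real.exp (-((y - x) * t)) := by
          gcongr
          exact Real.add_one_le_exp _
      _ = Real.exp (-(y * t)) := by
          rw [← Real.exp_add]
          ring_nf
  calc (1 - Real.exp (-(y * t))) * μ t
      ≤ (1 - Real.exp (-(x * t)) * (-((y - x) * t) + 1)) * μ t := by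
        have := hμ t ht
        gcongr
    _ = _ := by ring

end LevyDensity

theorem integral_one_sub_exp_mul_nonneg {μ : ℝ → ℝ} {l : ℝ} (hμ : ∀ t, 0 < t → 0 ≤ μ t)
    (hl : 0 < l) : 0 ≤ ∫ t in Ioi (0 : ℝ), (1 - Real.exp (-(l * t))) * μ t :=
  setIntegral_nonneg measurableSet_Ioi fun t ht =>
    mul_nonneg (sub_nonneg.2 (Real.exp_le_one_iff.2 (neg_nonpos.2 (mul_pos hl ht).le))) (hμ t ht)

/-- Under (A-1) with `α = 2` and (A-3), the potential density satisfies
`u(t) ∼ 1/φ'(t⁻¹) ∼ 1/(t φ(t⁻¹))` as `t → 0+`. -/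
theorem potential_density_asymp_alpha_two
    (μ φ φ' : ℝ → ℝ)
    (hμpos : ∀ t, 0 < t → 0 < μ t)
    (hμdec : ∀ s t, 0 < s → s ≤ t → μ t ≤ μ s)
    (hμint : IntegrableOn (fun t => min 1 t * μ t) (Ioi 0))
    (hφ : ∀ l, 0 < l → φ l = ∫ t in Ioi (0:ℝ), (1 - Real.exp (-(l * t))) * μ t)
    (hφ' : ∀ l, 0 < l → φ' l = ∫ t in Ioi (0:ℝ), t * Real.exp (-(l * t)) * μ t)
    (hA1 : ∀ x, 0 < x →
      Tendsto (fun l => φ' (l * x) / φ' l) atTop (𝓝 (1 : ℝ)))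
    (u : ℝ → ℝ)
    (hupos : ∀ t, 0 < t → 0 < u t)
    (hudec : ∀ s t, 0 < s → s ≤ t → u t ≤ u s)
    (hu : ∀ l, 0 < l → ∫ t in Ioi (0:ℝ), Real.exp (-(l * t)) * u t = 1 / φ l) :
    Tendsto (fun t => u t * φ' t⁻¹) (𝓝[>] (0:ℝ)) (𝓝 1) ∧
    Tendsto (fun t => u t * t * φ t⁻¹) (𝓝[>] (0:ℝ)) (𝓝 1) := by
  have hμ : ∀ t, 0 < t → 0 ≤ μ t := fun t ht => (hμpos t ht).le
  have hsuper : IsSupergradientOn φ φ' (Ioi 0) := fun x hx y hy => by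
    rw [hφ x hx, hφ y hy, hφ' x hx]
    exact isSupergradientOn_integral_one_sub_exp hμint hμ x hx y hy
  exact potential_density_asymp_alpha_two_general hsuper
    (fun l hl => hφ l hl ▸ integral_one_sub_exp_mul_nonneg hμ hl)
    (by simpa only [mul_comm] using hA1 2 two_pos) (fun s hs t _ hst => hudec s t hs hst) hu
end

section
/- Let d ≥ 3 be an integer and assume condition (A-1) holds with some index α ∈ [0,2). Then the Lévy density of the subordinate Brownian motion satisfies j(r) ≍ r^{−d−2} φ'(r^{−2}) as r → 0+. -/
open MeasureTheory Set Filter Topology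

/-!
Write `s = r²`. Monotonicity of `μ` turns values of `μ` into values of `φ'` and back.

* Restricting the integral `φ'(1/t)` to `(t/2, t]` gives `μ(t) ≤ C t⁻² φ'(1/t)`, and hence, as `μ`
  and `φ'` decrease, `μ(t) ≤ C (s⁻² + t⁻²) φ'(1/s)` for all `s, t > 0`. Integrating this against the
  heat kernel, whose moments of order `0` and `-2` in time are Gamma integrals, bounds `j(r)` from
  above. The moment of order `0` is the Green function, whence the restriction `d > 2`.
* Splitting the integral `φ'(l)` at `t = 1/m` gives `φ'(l) ≤ e φ'(m) + l⁻² μ(1/m)`. If `φ'` decays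
  geometrically, then for `l = 1/s` and `m = x l` with `x` large the first term is at most half of
  the left side, so `μ(s/x)` is at least a multiple of `s⁻² φ'(1/s)`. Restricting the integral
  `j(r)` to `t ∈ (s/(2x), s/x]` bounds `j(r)` from below.
-/

lemma sub_mul_le_setIntegral {f : ℝ → ℝ} {S : Set ℝ} {a b c : ℝ} (hS : MeasurableSet S)
    (hf : IntegrableOn f S) (hf0 : ∀ t ∈ S, 0 ≤ f t) (hab : a ≤ b) (hsub : Ioc a b ⊆ S)
    (hc : ∀ t ∈ Ioc a b, c ≤ f t) : (b - a) * c ≤ ∫ t in S, f t := by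
  calc (b - a) * c ≤ ∫ t in Ioc a b, f t := by
        simpa [Real.volume_real_Ioc_of_le hab] using
          setIntegral_ge_of_const_le measurableSet_Ioc (by simp) hc (hf.mono_set hsub)
    _ ≤ ∫ t in S, f t :=
        setIntegral_mono_set hf ((ae_restrict_iff' hS).2 (ae_of_all _ hf0)) hsub.eventuallyLE

lemma integral_mul_exp_neg_mul_Ioi {l : ℝ} (hl : 0 < l) :
    ∫ t in Ioi (0 : ℝ), t * Real.exp (-(l * t)) = 1 / l ^ 2 := by
  simpa [show (2 : ℝ) - 1 = 1 by norm_num] using Real.integral_rpow_mul_exp_neg_mul_Ioi two_pos hl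

lemma integrableOn_mul_exp_neg_mul_Ioi {l : ℝ} (hl : 0 < l) :
    IntegrableOn (fun t : ℝ => t * Real.exp (-(l * t))) (Ioi 0) :=
  .of_integral_ne_zero (by rw [integral_mul_exp_neg_mul_Ioi hl]; positivity)

lemma integral_rpow_neg_mul_exp_neg_div_Ioi {p a : ℝ} (hp : 1 < p) (ha : 0 < a) :
    ∫ t in Ioi (0 : ℝ), t ^ (-p) * Real.exp (-(a / t)) = Real.Gamma (p - 1) * a ^ (1 - p) := by
  calc ∫ t in Ioi (0 : ℝ), t ^ (-p) * Real.exp (-(a / t))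
      = ∫ t in Ioi (0 : ℝ), (|(-1 : ℝ)| * t ^ ((-1 : ℝ) - 1)) •
          ((t ^ (-1 : ℝ)) ^ (p - 1 - 1) * Real.exp (-(a * t ^ (-1 : ℝ)))) := by
        refine setIntegral_congr_fun measurableSet_Ioi fun t (ht : 0 < t) => ?_
        have hpow : t ^ (-p) = t ^ ((-1 : ℝ) - 1) * (t ^ (-1 : ℝ)) ^ (p - 1 - 1) := by
          rw [← Real.rpow_mul ht.le, ← Real.rpow_add ht]
          ring_nf
        simp only [hpow, abs_neg, abs_one, one_mul, smul_eq_mul, Real.rpow_neg_one, div_eq_mul_inv,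
          mul_assoc]
    _ = ∫ u in Ioi (0 : ℝ), u ^ (p - 1 - 1) * Real.exp (-(a * u)) :=
        integral_comp_rpow_Ioi (fun u => u ^ (p - 1 - 1) * Real.exp (-(a * u))) (by norm_num)
    _ = Real.Gamma (p - 1) * a ^ (1 - p) := by
        rw [Real.integral_rpow_mul_exp_neg_mul_Ioi (by linarith) ha, one_div,
          Real.inv_rpow ha.le, ← Real.rpow_neg ha.le, neg_sub, mul_comm]

/-- Geometric decay of `f` along some geometric progression of arguments: for positive
nonincreasing `f`, this says that the upper Matuszewska index of `f` at `∞` is negative. It weakens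
regular variation with negative index. -/
def HasGeometricDecay (f : ℝ → ℝ) : Prop :=
  ∃ x > (1 : ℝ), ∃ q ∈ Ico (0 : ℝ) 1, ∀ᶠ l in atTop, |f (l * x)| ≤ q * |f l|

lemma HasGeometricDecay.of_tendsto_div_rpow {f : ℝ → ℝ} {x ρ : ℝ} (hx : 1 < x) (hρ : ρ < 0)
    (h : Tendsto (fun l => f (l * x) / f l) atTop (𝓝 (x ^ ρ))) : HasGeometricDecay f := by
  have hlim_pos : 0 < x ^ ρ := Real.rpow_pos_of_pos (one_pos.trans hx) ρ
  obtain ⟨q, hlim_lt, hq1⟩ := exists_between (Real.rpow_lt_one_of_one_lt_of_neg hx hρ)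
  refine ⟨x, hx, q, ⟨(hlim_pos.trans hlim_lt).le, hq1⟩, ?_⟩
  filter_upwards [h.eventually (Ioo_mem_nhds hlim_pos hlim_lt)] with l ⟨hratio_pos, hratio_lt⟩
  have hl : f l ≠ 0 := fun h0 => by simp [h0] at hratio_pos
  rw [← div_le_iff₀ (abs_pos.2 hl), ← abs_div, abs_of_pos hratio_pos]
  exact hratio_lt.le

lemma HasGeometricDecay.exists_abs_le {f : ℝ → ℝ} (hf : HasGeometricDecay f) {ε : ℝ} (hε : 0 < ε) :
    ∃ x > 0, ∀ᶠ l in atTop, |f (l * x)| ≤ ε * |f l| := by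
  obtain ⟨x, hx, q, ⟨hq0, hq1⟩, hdecay⟩ := hf
  have hx0 : 0 < x := one_pos.trans hx
  have hiter (n : ℕ) : ∀ᶠ l in atTop, |f (l * x ^ n)| ≤ q ^ n * |f l| := by
    induction n with
    | zero => simp
    | succ n ih =>
      filter_upwards [ih, (tendsto_id.atTop_mul_const (pow_pos hx0 n)).eventually hdecay]
        with l hn hstep
      calc |f (l * x ^ (n + 1))| = |f (l * x ^ n * x)| := by rw [pow_succ, mul_assoc]
        _ ≤ q * |f (l * x ^ n)| := hstep
        _ ≤ q * (q ^ n * |f l|) := by gcongr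
        _ = q ^ (n + 1) * |f l| := by ring
  obtain ⟨n, hn⟩ := exists_pow_lt_of_lt_one hε hq1
  refine ⟨x ^ n, pow_pos hx0 n, (hiter n).mono fun l hl => hl.trans ?_⟩
  gcongr

/-- The derivative `φ'` of the Bernstein function `φ(l) = ∫ (1 - exp (-l t)) μ(t) dt` with Lévy
density `μ`. -/
noncomputable def bernsteinDeriv (μ : ℝ → ℝ) (l : ℝ) : ℝ :=
  ∫ t in Ioi (0 : ℝ), t * Real.exp (-(l * t)) * μ t

/-- The transition density at time `t` and distance `r` of the `d`-dimensional Brownian motion with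
generator `Δ` (rather than `Δ/2`). -/
noncomputable def heatKernel (d t r : ℝ) : ℝ :=
  (4 * Real.pi * t) ^ (-d / 2) * Real.exp (-(r ^ 2 / (4 * t)))

/-- The Lévy density at distance `r` of the `d`-dimensional Brownian motion subordinated by a
subordinator with Lévy density `μ`. -/
noncomputable def jumpDensity (d : ℝ) (μ : ℝ → ℝ) (r : ℝ) : ℝ :=
  ∫ t in Ioi (0 : ℝ), heatKernel d t r * μ t

lemma heatKernel_nonneg (d r : ℝ) {t : ℝ} (ht : 0 < t) : 0 ≤ heatKernel d t r := by
  unfold heatKernel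
  positivity

section Moments

variable {d k r : ℝ}

lemma integral_heatKernel_mul_rpow_neg (hk : 1 < d / 2 + k) (hr : 0 < r) :
    ∫ t in Ioi (0 : ℝ), heatKernel d t r * t ^ (-k) =
      Real.pi ^ (-d / 2) * 4 ^ (k - 1) * Real.Gamma (d / 2 + k - 1) * r ^ (2 - d - 2 * k) := by
  have hscale (t : ℝ) (ht : 0 < t) : heatKernel d t r * t ^ (-k) =
      (4 * Real.pi) ^ (-d / 2) * (t ^ (-(d / 2 + k)) * Real.exp (-(r ^ 2 / 4 / t))) := by
    have hpow : t ^ (-(d / 2 + k)) = t ^ (-d / 2) * t ^ (-k) := by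
      rw [← Real.rpow_add ht]
      ring_nf
    rw [heatKernel, Real.mul_rpow (by positivity) ht.le, hpow, div_div]
    ring
  have hfour : (4 : ℝ) ^ (-d / 2) = 4 ^ (k - 1) * 4 ^ (1 - (d / 2 + k)) := by
    rw [← Real.rpow_add four_pos]
    ring_nf
  have hr2 : (r ^ 2) ^ (1 - (d / 2 + k)) = r ^ (2 - d - 2 * k) := by
    rw [← Real.rpow_natCast_mul hr.le]
    push_cast
    ring_nf
  rw [setIntegral_congr_fun measurableSet_Ioi hscale, integral_const_mul,
    integral_rpow_neg_mul_exp_neg_div_Ioi hk (by positivity),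
    Real.mul_rpow (by positivity) Real.pi_pos.le, Real.div_rpow (by positivity) (by positivity),
    hr2, hfour]
  field_simp

lemma integrableOn_heatKernel_mul_rpow_neg (hk : 1 < d / 2 + k) (hr : 0 < r) :
    IntegrableOn (fun t => heatKernel d t r * t ^ (-k)) (Ioi 0) := by
  refine .of_integral_ne_zero ?_
  rw [integral_heatKernel_mul_rpow_neg hk hr]
  have := Real.Gamma_pos_of_pos (sub_pos.2 hk)
  positivity

lemma integral_heatKernel_mul_rpow_add_rpow (hd : 2 < d) (hr : 0 < r) :
    ∫ t in Ioi (0 : ℝ), heatKernel d t r * (r ^ (-4 : ℝ) + t ^ (-2 : ℝ)) =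
      Real.pi ^ (-d / 2) * (Real.Gamma (d / 2 - 1) / 4 + 4 * Real.Gamma (d / 2 + 1)) *
        r ^ (-d - 2) := by
  have h0 : 1 < d / 2 + 0 := by linarith
  have h2 : 1 < d / 2 + 2 := by linarith
  have hsplit (t : ℝ) : heatKernel d t r * (r ^ (-4 : ℝ) + t ^ (-2 : ℝ)) =
      r ^ (-4 : ℝ) * (heatKernel d t r * t ^ (-0 : ℝ)) + heatKernel d t r * t ^ (-2 : ℝ) := by
    rw [neg_zero, Real.rpow_zero]
    ring
  have hr0 : r ^ (-4 : ℝ) * r ^ (2 - d - 2 * 0) = r ^ (-d - 2) := by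
    rw [← Real.rpow_add hr]
    ring_nf
  calc ∫ t in Ioi (0 : ℝ), heatKernel d t r * (r ^ (-4 : ℝ) + t ^ (-2 : ℝ))
      = Real.pi ^ (-d / 2) * (4⁻¹ * Real.Gamma (d / 2 - 1) * (r ^ (-4 : ℝ) * r ^ (2 - d - 2 * 0)) +
          4 * Real.Gamma (d / 2 + 1) * r ^ (2 - d - 2 * 2)) := by
        simp_rw [hsplit]
        rw [integral_add ((integrableOn_heatKernel_mul_rpow_neg h0 hr).const_mul _)
            (integrableOn_heatKernel_mul_rpow_neg h2 hr), integral_const_mul,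
          integral_heatKernel_mul_rpow_neg h0 hr, integral_heatKernel_mul_rpow_neg h2 hr,
          add_zero, zero_sub, Real.rpow_neg_one, show (2 : ℝ) - 1 = 1 by norm_num, Real.rpow_one,
          show d / 2 + 2 - 1 = d / 2 + 1 by ring]
        ring
    _ = _ := by
        rw [hr0, show 2 - d - 2 * 2 = -d - 2 by ring]
        ring

lemma integrableOn_heatKernel_mul_rpow_add_rpow (hd : 2 < d) (hr : 0 < r) :
    IntegrableOn (fun t => heatKernel d t r * (r ^ (-4 : ℝ) + t ^ (-2 : ℝ))) (Ioi 0) := by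
  refine .of_integral_ne_zero ?_
  rw [integral_heatKernel_mul_rpow_add_rpow hd hr]
  have := Real.Gamma_pos_of_pos (show 0 < d / 2 - 1 by linarith)
  have := Real.Gamma_pos_of_pos (show 0 < d / 2 + 1 by linarith)
  positivity

end Moments

lemma integrableOn_mul_exp_neg_mul_of_min_one {μ : ℝ → ℝ} (hμ0 : ∀ t, 0 < t → 0 ≤ μ t)
    (hμ : AEStronglyMeasurable μ (volume.restrict (Ioi 0)))
    (hμint : IntegrableOn (fun t => min 1 t * μ t) (Ioi 0)) {l : ℝ} (hl : 0 < l) :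
    IntegrableOn (fun t => t * Real.exp (-(l * t)) * μ t) (Ioi 0) := by
  refine (hμint.const_mul (1 + 1 / l)).mono' (.mul (by fun_prop) hμ) ?_
  filter_upwards [ae_restrict_mem measurableSet_Ioi] with t (ht : 0 < t)
  have hμt := hμ0 t ht
  have hle_self : t * Real.exp (-(l * t)) ≤ t :=
    mul_le_of_le_one_right ht.le (Real.exp_le_one_iff.2 (by nlinarith))
  have hle_inv : t * Real.exp (-(l * t)) ≤ 1 / l := by
    rw [Real.exp_neg, ← div_eq_mul_inv, div_le_div_iff₀ (Real.exp_pos _) hl]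
    linarith [Real.add_one_le_exp (l * t)]
  have hle_min : t * Real.exp (-(l * t)) ≤ (1 + 1 / l) * min 1 t := by
    have hl' : 0 < 1 / l := by positivity
    rcases le_total 1 t with h | h
    · rw [min_eq_left h]; linarith
    · rw [min_eq_right h]; nlinarith
  rw [Real.norm_of_nonneg (by positivity), ← mul_assoc]
  gcongr

section DecreasingDensity

variable {μ : ℝ → ℝ} {d r s t x l m : ℝ} (hμ0 : ∀ t, 0 < t → 0 ≤ μ t)

include hμ0

lemma bernsteinDeriv_nonneg (l : ℝ) : 0 ≤ bernsteinDeriv μ l :=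
  setIntegral_nonneg measurableSet_Ioi fun t (ht : 0 < t) =>
    mul_nonneg (by positivity) (hμ0 t ht)

variable (hint : ∀ l, 0 < l → IntegrableOn (fun t => t * Real.exp (-(l * t)) * μ t) (Ioi 0))

include hint

lemma bernsteinDeriv_antitoneOn : AntitoneOn (bernsteinDeriv μ) (Ioi 0) := by
  intro a ha b hb hab
  refine setIntegral_mono_on (hint b hb) (hint a ha) measurableSet_Ioi fun t (ht : 0 < t) => ?_
  have := hμ0 t ht
  gcongr

variable (hμ : AntitoneOn μ (Ioi 0))

include hμ

lemma density_le_bernsteinDeriv_inv (ht : 0 < t) :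
    μ t ≤ 4 * Real.exp 1 * t ^ (-2 : ℝ) * bernsteinDeriv μ t⁻¹ := by
  have hμt := hμ0 t ht
  have hlower : (t - t / 2) * (t / 2 * Real.exp (-1) * μ t) ≤ bernsteinDeriv μ t⁻¹ := by
    refine sub_mul_le_setIntegral measurableSet_Ioi (hint _ (inv_pos.2 ht))
      (fun u (hu : 0 < u) => mul_nonneg (by positivity) (hμ0 u hu)) (by linarith)
      (fun u hu => (half_pos ht).trans hu.1) fun u ⟨hu, hut⟩ => ?_
    have hu0 : 0 < u := (half_pos ht).trans hu
    have hexp : t⁻¹ * u ≤ 1 := by rwa [inv_mul_le_one₀ ht]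
    have hμu : μ t ≤ μ u := hμ hu0 ht hut
    gcongr
  calc μ t = 4 * Real.exp 1 * t ^ (-2 : ℝ) * ((t - t / 2) * (t / 2 * Real.exp (-1) * μ t)) := by
        rw [Real.rpow_neg ht.le, Real.rpow_two, Real.exp_neg]
        field_simp
        ring
    _ ≤ _ := by gcongr

lemma density_le_add_mul_bernsteinDeriv_inv (hs : 0 < s) (ht : 0 < t) :
    μ t ≤ 4 * Real.exp 1 * (s ^ (-2 : ℝ) + t ^ (-2 : ℝ)) * bernsteinDeriv μ s⁻¹ := by
  have hφ's := bernsteinDeriv_nonneg hμ0 s⁻¹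
  have hφ't := bernsteinDeriv_nonneg hμ0 t⁻¹
  rcases le_total t s with hts | hst
  · have hmono : bernsteinDeriv μ t⁻¹ ≤ bernsteinDeriv μ s⁻¹ :=
      bernsteinDeriv_antitoneOn hμ0 hint (inv_pos.2 hs) (inv_pos.2 ht) (by gcongr)
    calc μ t ≤ 4 * Real.exp 1 * t ^ (-2 : ℝ) * bernsteinDeriv μ t⁻¹ :=
          density_le_bernsteinDeriv_inv hμ0 hint hμ ht
      _ ≤ 4 * Real.exp 1 * (s ^ (-2 : ℝ) + t ^ (-2 : ℝ)) * bernsteinDeriv μ s⁻¹ := by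
          gcongr
          exact le_add_of_nonneg_left (by positivity)
  · calc μ t ≤ μ s := hμ hs ht hst
      _ ≤ 4 * Real.exp 1 * s ^ (-2 : ℝ) * bernsteinDeriv μ s⁻¹ :=
          density_le_bernsteinDeriv_inv hμ0 hint hμ hs
      _ ≤ 4 * Real.exp 1 * (s ^ (-2 : ℝ) + t ^ (-2 : ℝ)) * bernsteinDeriv μ s⁻¹ := by
          gcongr
          exact le_add_of_nonneg_right (by positivity)

lemma bernsteinDeriv_le_add_density_inv (hl : 0 < l) (hm : 0 < m) :
    bernsteinDeriv μ l ≤ Real.exp 1 * bernsteinDeriv μ m + μ m⁻¹ / l ^ 2 := by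
  have hm' : 0 < m⁻¹ := inv_pos.2 hm
  have hint_tail : IntegrableOn (fun t => t * Real.exp (-(l * t)) * μ m⁻¹) (Ioi 0) :=
    (integrableOn_mul_exp_neg_mul_Ioi hl).mul_const _
  have hpointwise (t : ℝ) (ht : 0 < t) : t * Real.exp (-(l * t)) * μ t ≤
      Real.exp 1 * (t * Real.exp (-(m * t)) * μ t) + t * Real.exp (-(l * t)) * μ m⁻¹ := by
    have hμt := hμ0 t ht
    have hμm := hμ0 m⁻¹ hm'
    rcases le_total t m⁻¹ with htm | hmt
    · have hmt1 : m * t ≤ 1 :=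
        (mul_le_mul_of_nonneg_left htm hm.le).trans_eq (mul_inv_cancel₀ hm.ne')
      have hexp : Real.exp (-(l * t)) ≤ Real.exp 1 * Real.exp (-(m * t)) := by
        rw [← Real.exp_add]
        gcongr
        nlinarith
      calc t * Real.exp (-(l * t)) * μ t ≤ t * (Real.exp 1 * Real.exp (-(m * t))) * μ t := by gcongr
        _ = Real.exp 1 * (t * Real.exp (-(m * t)) * μ t) := by ring
        _ ≤ _ := le_add_of_nonneg_right (by positivity)
    · have hμle : μ t ≤ μ m⁻¹ := hμ hm' ht hmt
      calc t * Real.exp (-(l * t)) * μ t ≤ t * Real.exp (-(l * t)) * μ m⁻¹ := by gcongr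
        _ ≤ _ := le_add_of_nonneg_left (by positivity)
  calc bernsteinDeriv μ l
      ≤ ∫ t in Ioi (0 : ℝ), (Real.exp 1 * (t * Real.exp (-(m * t)) * μ t) +
          t * Real.exp (-(l * t)) * μ m⁻¹) :=
        setIntegral_mono_on (hint l hl) (((hint m hm).const_mul _).add hint_tail) measurableSet_Ioi
          hpointwise
    _ = Real.exp 1 * bernsteinDeriv μ m + μ m⁻¹ / l ^ 2 := by
        rw [integral_add ((hint m hm).const_mul _) hint_tail, integral_const_mul,
          integral_mul_const, integral_mul_exp_neg_mul_Ioi hl, one_div_mul_eq_div, bernsteinDeriv]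

lemma heatKernel_mul_density_le (hr : 0 < r) (ht : 0 < t) :
    heatKernel d t r * μ t ≤ 4 * Real.exp 1 * bernsteinDeriv μ (r ^ (-2 : ℝ)) *
      (heatKernel d t r * (r ^ (-4 : ℝ) + t ^ (-2 : ℝ))) := by
  have hK := heatKernel_nonneg d r ht
  have hr4 : (r ^ 2) ^ (-2 : ℝ) = r ^ (-4 : ℝ) := by
    rw [← Real.rpow_natCast_mul hr.le]
    norm_num
  have hr2 : (r ^ 2)⁻¹ = r ^ (-2 : ℝ) := by rw [Real.rpow_neg hr.le, Real.rpow_two]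
  calc heatKernel d t r * μ t
      ≤ heatKernel d t r * (4 * Real.exp 1 * ((r ^ 2) ^ (-2 : ℝ) + t ^ (-2 : ℝ)) *
          bernsteinDeriv μ (r ^ 2)⁻¹) := by
        gcongr
        exact density_le_add_mul_bernsteinDeriv_inv hμ0 hint hμ (pow_pos hr 2) ht
    _ = _ := by
        rw [hr4, hr2]
        ring

lemma integrableOn_heatKernel_mul_density (hd : 2 < d) (hr : 0 < r) :
    IntegrableOn (fun t => heatKernel d t r * μ t) (Ioi 0) := by
  have hKmeas : Measurable fun t => heatKernel d t r := by
    unfold heatKernel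
    fun_prop
  have hμmeas : AEStronglyMeasurable μ (volume.restrict (Ioi 0)) :=
    (aemeasurable_restrict_of_antitoneOn measurableSet_Ioi hμ).aestronglyMeasurable
  refine ((integrableOn_heatKernel_mul_rpow_add_rpow hd hr).const_mul
    (4 * Real.exp 1 * bernsteinDeriv μ (r ^ (-2 : ℝ)))).mono'
    (hKmeas.aestronglyMeasurable.mul hμmeas) ?_
  filter_upwards [ae_restrict_mem measurableSet_Ioi] with t (ht : 0 < t)
  rw [Real.norm_of_nonneg (mul_nonneg (heatKernel_nonneg d r ht) (hμ0 t ht))]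
  exact heatKernel_mul_density_le hμ0 hint hμ hr ht

lemma jumpDensity_le (hd : 2 < d) (hr : 0 < r) :
    jumpDensity d μ r ≤ 4 * Real.exp 1 * (Real.pi ^ (-d / 2) *
        (Real.Gamma (d / 2 - 1) / 4 + 4 * Real.Gamma (d / 2 + 1))) *
      (r ^ (-d - 2) * bernsteinDeriv μ (r ^ (-2 : ℝ))) := by
  calc jumpDensity d μ r
      ≤ ∫ t in Ioi (0 : ℝ), 4 * Real.exp 1 * bernsteinDeriv μ (r ^ (-2 : ℝ)) *
          (heatKernel d t r * (r ^ (-4 : ℝ) + t ^ (-2 : ℝ))) :=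
        setIntegral_mono_on (integrableOn_heatKernel_mul_density hμ0 hint hμ hd hr)
          ((integrableOn_heatKernel_mul_rpow_add_rpow hd hr).const_mul _) measurableSet_Ioi
          fun t ht => heatKernel_mul_density_le hμ0 hint hμ hr ht
    _ = _ := by
        rw [integral_const_mul, integral_heatKernel_mul_rpow_add_rpow hd hr]
        ring

omit hint in
lemma half_mul_density_le_jumpDensity (hd : 0 ≤ d)
    (hK : IntegrableOn (fun t => heatKernel d t r * μ t) (Ioi 0)) (ht : 0 < t) :
    t / 2 * ((4 * Real.pi * t) ^ (-d / 2) * Real.exp (-(r ^ 2 / (2 * t))) * μ t) ≤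
      jumpDensity d μ r := by
  rw [show t / 2 = t - t / 2 by ring]
  refine sub_mul_le_setIntegral measurableSet_Ioi hK
    (fun u hu => mul_nonneg (heatKernel_nonneg d r hu) (hμ0 u hu)) (by linarith)
    (fun u hu => (half_pos ht).trans hu.1) fun u ⟨htu, hut⟩ => ?_
  have hu : 0 < u := (half_pos ht).trans htu
  have hμt := hμ0 t ht
  have hμu : μ t ≤ μ u := hμ hu ht hut
  have hpow : (4 * Real.pi * t) ^ (-d / 2) ≤ (4 * Real.pi * u) ^ (-d / 2) :=
    Real.rpow_le_rpow_of_nonpos (by positivity) (by gcongr) (by linarith)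
  have hexp : r ^ 2 / (4 * u) ≤ r ^ 2 / (2 * t) := by
    gcongr r ^ 2 / ?_
    linarith
  unfold heatKernel
  gcongr

lemma le_jumpDensity (hd : 2 < d) (hr : 0 < r) (hx : 0 < x)
    (hdecay : bernsteinDeriv μ (r ^ (-2 : ℝ) * x) ≤
      Real.exp (-1) / 2 * bernsteinDeriv μ (r ^ (-2 : ℝ))) :
    (4 * Real.pi / x) ^ (-d / 2) * Real.exp (-(x / 2)) / (4 * x) *
      (r ^ (-d - 2) * bernsteinDeriv μ (r ^ (-2 : ℝ))) ≤ jumpDensity d μ r := by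
  set Φ := bernsteinDeriv μ (r ^ (-2 : ℝ))
  set b := r ^ 2 / x with hb
  have hr2 : r ^ (-2 : ℝ) = (r ^ 2)⁻¹ := by rw [Real.rpow_neg hr.le, Real.rpow_two]
  have hμb : Φ / (2 * r ^ 4) ≤ μ b := by
    have hsplit := bernsteinDeriv_le_add_density_inv hμ0 hint hμ (l := r ^ (-2 : ℝ))
      (m := r ^ (-2 : ℝ) * x) (by positivity) (by positivity)
    have hhalf : Real.exp 1 * bernsteinDeriv μ (r ^ (-2 : ℝ) * x) ≤ Φ / 2 := by
      calc _ ≤ Real.exp 1 * (Real.exp (-1) / 2 * Φ) := by gcongr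
        _ = Φ / 2 := by rw [Real.exp_neg]; field_simp
    have hscale : μ (r ^ (-2 : ℝ) * x)⁻¹ / (r ^ (-2 : ℝ)) ^ 2 = μ b * r ^ 4 := by
      rw [hr2, show ((r ^ 2)⁻¹ * x)⁻¹ = b by rw [hb]; field_simp]
      field_simp
    rw [div_le_iff₀ (by positivity)]
    linarith
  have hpow : (4 * Real.pi * b) ^ (-d / 2) = (4 * Real.pi / x) ^ (-d / 2) * r ^ (-d) := by
    rw [show 4 * Real.pi * b = 4 * Real.pi / x * r ^ 2 by rw [hb]; ring,
      Real.mul_rpow (by positivity) (by positivity), ← Real.rpow_natCast_mul hr.le]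
    push_cast
    ring_nf
  calc _ = b / 2 * ((4 * Real.pi * b) ^ (-d / 2) * Real.exp (-(r ^ 2 / (2 * b))) *
        (Φ / (2 * r ^ 4))) := by
        rw [hpow, show r ^ 2 / (2 * b) = x / 2 by rw [hb]; field_simp, sub_eq_add_neg,
          Real.rpow_add hr, hr2, hb]
        field_simp
        ring
    _ ≤ b / 2 * ((4 * Real.pi * b) ^ (-d / 2) * Real.exp (-(r ^ 2 / (2 * b))) * μ b) := by
        gcongr
    _ ≤ jumpDensity d μ r :=
        half_mul_density_le_jumpDensity hμ0 hμ (by linarith)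
          (integrableOn_heatKernel_mul_density hμ0 hint hμ hd hr) (by positivity)

end DecreasingDensity

theorem sbm_jump_asymp_general {d : ℝ} (hd : 2 < d) {μ φ' j : ℝ → ℝ}
    (hμ0 : ∀ t, 0 < t → 0 ≤ μ t) (hμ : AntitoneOn μ (Ioi 0))
    (hint : ∀ l, 0 < l → IntegrableOn (fun t => t * Real.exp (-(l * t)) * μ t) (Ioi 0))
    (hφ' : ∀ l, 0 < l → φ' l = bernsteinDeriv μ l) (hdecay : HasGeometricDecay φ')
    (hj : ∀ r, 0 < r → j r = jumpDensity d μ r) :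
    ∃ c C r₀ : ℝ, 0 < c ∧ c ≤ C ∧ 0 < r₀ ∧ ∀ r, 0 < r → r < r₀ →
      c * (r ^ (-d - 2) * φ' (r ^ (-2 : ℝ))) ≤ j r ∧
      j r ≤ C * (r ^ (-d - 2) * φ' (r ^ (-2 : ℝ))) := by
  obtain ⟨x, hx, hdecay_x⟩ := hdecay.exists_abs_le (ε := Real.exp (-1) / 2) (by positivity)
  obtain ⟨r₀, hr₀, hsmall⟩ := mem_nhdsGT_iff_exists_Ioo_subset.1
    ((tendsto_rpow_neg_nhdsGT_zero (y := -2) (by norm_num)).eventually hdecay_x)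
  refine ⟨(4 * Real.pi / x) ^ (-d / 2) * Real.exp (-(x / 2)) / (4 * x),
    max _ (4 * Real.exp 1 * (Real.pi ^ (-d / 2) *
      (Real.Gamma (d / 2 - 1) / 4 + 4 * Real.Gamma (d / 2 + 1)))),
    r₀, by positivity, le_max_left _ _, hr₀, fun r hr hrr₀ => ?_⟩
  have hl : 0 < r ^ (-2 : ℝ) := by positivity
  have hφ'0 := bernsteinDeriv_nonneg hμ0
  have hdecay_r : |φ' (r ^ (-2 : ℝ) * x)| ≤ Real.exp (-1) / 2 * |φ' (r ^ (-2 : ℝ))| :=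
    hsmall ⟨hr, hrr₀⟩
  rw [hφ' _ (mul_pos hl hx), hφ' _ hl, abs_of_nonneg (hφ'0 _),
    abs_of_nonneg (hφ'0 _)] at hdecay_r
  rw [hj r hr, hφ' _ hl]
  refine ⟨le_jumpDensity hμ0 hint hμ hd hr hx hdecay_r,
    (jumpDensity_le hμ0 hint hμ hd hr).trans ?_⟩
  have := hφ'0 (r ^ (-2 : ℝ))
  gcongr
  exact le_max_right _ _

/-- Under (A-1) with `α ∈ [0,2)`, the Lévy density of the subordinate Brownian motion
satisfies `j(r) ≍ r^{-d-2} φ'(r⁻²)` as `r → 0+`. -/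
theorem sbm_jump_asymp
    (d : ℕ) (hd : 3 ≤ d)
    (α : ℝ) (hα0 : 0 ≤ α) (hα2 : α < 2)
    (μ φ φ' : ℝ → ℝ)
    (hμpos : ∀ t, 0 < t → 0 < μ t)
    (hμdec : ∀ s t, 0 < s → s ≤ t → μ t ≤ μ s)
    (hμint : IntegrableOn (fun t => min 1 t * μ t) (Ioi 0))
    (hφ : ∀ l, 0 < l → φ l = ∫ t in Ioi (0:ℝ), (1 - Real.exp (-(l * t))) * μ t)
    (hφ' : ∀ l, 0 < l → φ' l = ∫ t in Ioi (0:ℝ), t * Real.exp (-(l * t)) * μ t)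
    (hA1 : ∀ x, 0 < x →
      Tendsto (fun l => φ' (l * x) / φ' l) atTop (𝓝 (x ^ (α / 2 - 1))))
    (j : ℝ → ℝ)
    (hj : ∀ r, 0 < r → j r =
      ∫ t in Ioi (0:ℝ), (4 * Real.pi * t) ^ (-(d:ℝ) / 2) * Real.exp (-(r ^ 2 / (4 * t))) * μ t) :
    ∃ c C r₀ : ℝ, 0 < c ∧ c ≤ C ∧ 0 < r₀ ∧ ∀ r, 0 < r → r < r₀ →
      c * (r ^ (-(d:ℝ) - 2) * φ' (r ^ (-2 : ℝ))) ≤ j r ∧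
      j r ≤ C * (r ^ (-(d:ℝ) - 2) * φ' (r ^ (-2 : ℝ))) := by
  have hμ0 (t : ℝ) (ht : 0 < t) : 0 ≤ μ t := (hμpos t ht).le
  have hμ : AntitoneOn μ (Ioi 0) := fun s hs t _ hst => hμdec s t hs hst
  exact sbm_jump_asymp_general (by exact_mod_cast hd) hμ0 hμ
    (fun _ => integrableOn_mul_exp_neg_mul_of_min_one hμ0
      (aemeasurable_restrict_of_antitoneOn measurableSet_Ioi hμ).aestronglyMeasurable hμint)
    hφ' (.of_tendsto_div_rpow one_lt_two (by linarith) (hA1 2 two_pos)) hj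
end

section
/- Let d ≥ 3 be an integer and assume condition (A-1) holds with index α = 2, together with conditions (A-3) and (A-4). Then the Lévy density of the subordinate Brownian motion satisfies j(r) ≍ r^{−d−2} ( r² φ(r^{−2}) − φ'(r^{−2}) ) as r → 0+. -/
open MeasureTheory Set Filter Topology

/-!
With `w s = 1 - (1 + s) e⁻ˢ`, which is comparable to `min 1 s²`, the tangent intercept
`g(l) = φ(l) - l φ'(l)` is `∫ w(l t) μ(t) dt`, while `rᵈ j(r) = J(r⁻²)` for
`J(l) = ∫ k(l t) μ(t) dt`, where `k` is the heat kernel at unit distance. Since `k ≤ C w`, the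
upper bound is immediate. For the lower bound, `k` controls `w` on `[x⁻¹, x]`, and the two remaining
pieces of `w(l t)` are controlled by `x⁻² w(x l t)` and `w(x⁻¹ l t)`. So it suffices that `g(x l)`
and `g(x⁻¹ l)` are `O(x g(l))` and `O(x⁻¹ g(l))` with constants independent of `x`: fixing `x`
large, the two pieces are absorbed into `g(l)`.

Both growth bounds come from (A-4) and the concavity of `φ`. Write `ψ(l) = l / φ(l)`, so that
`g = ψ' φ²`. Concavity gives `l ψ'(l) / 2 ≤ ψ(2 l) - ψ(l)`, and summing this over dyadic scales, on
which `l ψ'(l)` is asymptotically constant, yields `l ψ'(l) = o(ψ(l))`, that is, `g = o(φ)`. As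
`φ(x⁻¹ l) ≤ x⁻¹ φ(l) + g(l)`, eventually `φ(x⁻¹ l) ≤ 2 x⁻¹ φ(l)`.
-/

section Supergradient

/-- `f'` is a supergradient of `f` on `(0, ∞)`: every line through `(a, f a)` with slope `f' a` lies
above the graph of `f`. For differentiable `f` this is concavity on `(0, ∞)`. -/
def IsSupergradient (f f' : ℝ → ℝ) : Prop :=
  ∀ a b, 0 < a → 0 < b → f b ≤ f a + (b - a) * f' a

/-- The ordinate at `0` of the line of slope `f' l` through `(l, f l)`. For a Laplace exponent `φ`,
the scaled jump density `rᵈ j(r)` is compared with it at `l = r⁻²`. -/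
def tangentIntercept (f f' : ℝ → ℝ) (l : ℝ) : ℝ :=
  f l - l * f' l

variable {f f' D : ℝ → ℝ} {l x : ℝ}

lemma IsSupergradient.tangentIntercept_nonneg (hf : IsSupergradient f f')
    (hnonneg : ∀ l, 0 < l → 0 ≤ f l) (hl : 0 < l) : 0 ≤ tangentIntercept f f' l := by
  have hlim : Tendsto (fun b => f l + (b - l) * f' l) (𝓝[>] 0) (𝓝 (f l + (0 - l) * f' l)) :=
    (Continuous.tendsto (by fun_prop) 0).mono_left nhdsWithin_le_nhds
  have hle : 0 ≤ f l + (0 - l) * f' l :=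
    ge_of_tendsto hlim (eventually_mem_nhdsWithin.mono fun b hb =>
      (hnonneg b hb).trans (hf l b hl hb))
  unfold tangentIntercept
  linarith

lemma IsSupergradient.map_mul_le (hf : IsSupergradient f f') (hnonneg : ∀ l, 0 < l → 0 ≤ f l)
    (hl : 0 < l) (hx : 1 ≤ x) : f (l * x) ≤ x * f l := by
  have hg : 0 ≤ f l - l * f' l := hf.tangentIntercept_nonneg hnonneg hl
  calc f (l * x) ≤ f l + (l * x - l) * f' l := hf l (l * x) hl (by positivity)
    _ = x * f l - (x - 1) * (f l - l * f' l) := by ring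
    _ ≤ x * f l := sub_le_self _ (mul_nonneg (sub_nonneg.2 hx) hg)

lemma IsSupergradient.map_mul_inv_le (hf : IsSupergradient f f') (hnonneg : ∀ l, 0 < l → 0 ≤ f l)
    (hl : 0 < l) (hx : 0 < x) : f (l * x⁻¹) ≤ x⁻¹ * f l + tangentIntercept f f' l := by
  have hg : 0 ≤ f l - l * f' l := hf.tangentIntercept_nonneg hnonneg hl
  calc f (l * x⁻¹) ≤ f l + (l * x⁻¹ - l) * f' l := hf l (l * x⁻¹) hl (by positivity)
    _ = x⁻¹ * f l + (f l - l * f' l) - x⁻¹ * (f l - l * f' l) := by ring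
    _ ≤ x⁻¹ * f l + (f l - l * f' l) := sub_le_self _ (by positivity)

/-! In the following lemmas `D = (f - l f') / f²` stands for the derivative of `l ↦ l / f l`. -/

lemma IsSupergradient.nonneg_of_mul_sq_eq (hf : IsSupergradient f f')
    (hpos : ∀ l, 0 < l → 0 < f l)
    (hD : ∀ l, 0 < l → D l * f l ^ 2 = tangentIntercept f f' l) (hl : 0 < l) : 0 ≤ D l :=
  nonneg_of_mul_nonneg_left
    (hD l hl ▸ hf.tangentIntercept_nonneg (fun l hl => (hpos l hl).le) hl) (pow_pos (hpos l hl) 2)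

lemma IsSupergradient.mul_half_add_div_le (hf : IsSupergradient f f') (hpos : ∀ l, 0 < l → 0 < f l)
    (hD : ∀ l, 0 < l → D l * f l ^ 2 = tangentIntercept f f' l) (hl : 0 < l) :
    l * D l / 2 + l / f l ≤ 2 * l / f (2 * l) := by
  have hfl := hpos l hl
  have hf2l := hpos (2 * l) (by positivity)
  have hg : D l * f l ^ 2 = f l - l * f' l := hD l hl
  have htan : f (2 * l) ≤ 2 * f l - D l * f l ^ 2 := by
    linarith [hf l (2 * l) hl (by positivity)]
  have hDl := hf.nonneg_of_mul_sq_eq hpos hD hl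
  rw [le_div_iff₀ hf2l]
  calc (l * D l / 2 + l / f l) * f (2 * l)
      = l / (2 * f l) * (2 + D l * f l) * f (2 * l) := by field_simp; ring
    _ ≤ l / (2 * f l) * (2 + D l * f l) * (2 * f l - D l * f l ^ 2) := by gcongr
    _ = 2 * l - l * (D l * f l) ^ 2 / 2 := by field_simp; ring
    _ ≤ 2 * l := sub_le_self _ (by positivity)

lemma IsSupergradient.sum_dyadic_le (hf : IsSupergradient f f') (hpos : ∀ l, 0 < l → 0 < f l)
    (hD : ∀ l, 0 < l → D l * f l ^ 2 = tangentIntercept f f' l) (n : ℕ) (hl : 0 < l) :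
    ∑ k ∈ Finset.range n, l * (2 ^ (k + 1))⁻¹ * D (l * (2 ^ (k + 1))⁻¹) ≤ 2 * (l / f l) := by
  suffices h : ∑ k ∈ Finset.range n, l * (2 ^ (k + 1))⁻¹ * D (l * (2 ^ (k + 1))⁻¹) +
      2 * (l * (2 ^ n)⁻¹ / f (l * (2 ^ n)⁻¹)) ≤ 2 * (l / f l) by
    have := hpos (l * (2 ^ n)⁻¹) (by positivity)
    exact (le_add_of_nonneg_right (by positivity)).trans h
  induction n with
  | zero => simp
  | succ n ih =>
    have hstep := hf.mul_half_add_div_le hpos hD (l := l * (2 ^ (n + 1))⁻¹) (by positivity)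
    have hdouble : 2 * (l * (2 ^ (n + 1))⁻¹) = l * (2 ^ n)⁻¹ := by
      rw [pow_succ]; field_simp
    rw [hdouble] at hstep
    rw [Finset.sum_range_succ]
    linarith

lemma eventually_ne_zero_of_tendsto_div
    (hreg : ∀ x, 0 < x → Tendsto (fun l => D (l * x) / D l) atTop (𝓝 x⁻¹)) :
    ∀ᶠ l in atTop, D l ≠ 0 := by
  filter_upwards [(hreg 1 one_pos).eventually_ne (inv_ne_zero one_ne_zero)] with l hratio hzero
  exact hratio (by rw [hzero, div_zero])

lemma tendsto_sum_dyadic_div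
    (hreg : ∀ x, 0 < x → Tendsto (fun l => D (l * x) / D l) atTop (𝓝 x⁻¹)) (n : ℕ) :
    Tendsto (fun l => (∑ k ∈ Finset.range n, l * (2 ^ (k + 1))⁻¹ * D (l * (2 ^ (k + 1))⁻¹)) /
      (l * D l)) atTop (𝓝 n) := by
  have hterm (k : ℕ) : Tendsto (fun l => (2 ^ (k + 1))⁻¹ * (D (l * (2 ^ (k + 1))⁻¹) / D l))
      atTop (𝓝 1) := by
    have hlim := (hreg (2 ^ (k + 1))⁻¹ (by positivity)).const_mul (2 ^ (k + 1))⁻¹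
    rwa [mul_inv_cancel₀ (by positivity)] at hlim
  have hsum : Tendsto (fun l => ∑ k ∈ Finset.range n,
      (2 ^ (k + 1))⁻¹ * (D (l * (2 ^ (k + 1))⁻¹) / D l)) atTop (𝓝 n) := by
    simpa using tendsto_finsetSum (Finset.range n) fun k _ => hterm k
  refine hsum.congr' ?_
  filter_upwards [eventually_ne_zero_of_tendsto_div hreg, eventually_gt_atTop 0] with l hDl hl
  rw [Finset.sum_div]
  refine Finset.sum_congr rfl fun k _ => ?_
  field_simp

lemma IsSupergradient.eventually_pos_of_tendsto_div (hf : IsSupergradient f f')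
    (hpos : ∀ l, 0 < l → 0 < f l)
    (hD : ∀ l, 0 < l → D l * f l ^ 2 = tangentIntercept f f' l)
    (hreg : ∀ x, 0 < x → Tendsto (fun l => D (l * x) / D l) atTop (𝓝 x⁻¹)) :
    ∀ᶠ l in atTop, 0 < D l := by
  filter_upwards [eventually_ne_zero_of_tendsto_div hreg, eventually_gt_atTop 0] with l hne hl
  exact (hf.nonneg_of_mul_sq_eq hpos hD hl).lt_of_ne' hne

lemma IsSupergradient.eventually_tangentIntercept_le (hf : IsSupergradient f f')
    (hpos : ∀ l, 0 < l → 0 < f l)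
    (hD : ∀ l, 0 < l → D l * f l ^ 2 = tangentIntercept f f' l)
    (hreg : ∀ x, 0 < x → Tendsto (fun l => D (l * x) / D l) atTop (𝓝 x⁻¹))
    {ε : ℝ} (hε : 0 < ε) :
    ∀ᶠ l in atTop, tangentIntercept f f' l ≤ ε * f l := by
  obtain ⟨n, hn⟩ := exists_nat_gt (2 / ε)
  filter_upwards [(tendsto_sum_dyadic_div hreg n).eventually_const_le hn,
    hf.eventually_pos_of_tendsto_div hpos hD hreg,
    eventually_gt_atTop 0] with l hsum hDl hl
  have hfl := hpos l hl
  have hψ : 2 / ε * (l * D l) ≤ 2 * (l / f l) :=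
    ((le_div_iff₀ (by positivity)).1 hsum).trans (hf.sum_dyadic_le hpos hD n hl)
  calc tangentIntercept f f' l = D l * f l ^ 2 := (hD l hl).symm
    _ = ε * f l ^ 2 / (2 * l) * (2 / ε * (l * D l)) := by field_simp
    _ ≤ ε * f l ^ 2 / (2 * l) * (2 * (l / f l)) := by gcongr
    _ = ε * f l := by field_simp

lemma IsSupergradient.eventually_tangentIntercept_mul_le (hf : IsSupergradient f f')
    (hpos : ∀ l, 0 < l → 0 < f l)
    (hD : ∀ l, 0 < l → D l * f l ^ 2 = tangentIntercept f f' l)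
    (hreg : ∀ x, 0 < x → Tendsto (fun l => D (l * x) / D l) atTop (𝓝 x⁻¹)) (hx : 1 ≤ x) :
    ∀ᶠ l in atTop, tangentIntercept f f' (l * x) ≤ 2 * x * tangentIntercept f f' l := by
  have hx0 : 0 < x := by linarith
  have hlim := (hreg x hx0).eventually_le_const (lt_two_mul_self (inv_pos.2 hx0))
  filter_upwards [hlim,
    hf.eventually_pos_of_tendsto_div hpos hD hreg, eventually_gt_atTop 0] with l hratio hDl hl
  have hDx : D (l * x) ≤ 2 * x⁻¹ * D l := (div_le_iff₀ hDl).1 hratio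
  have hfx : f (l * x) ≤ x * f l := hf.map_mul_le (fun l hl => (hpos l hl).le) hl hx
  have hfx0 := hpos (l * x) (by positivity)
  calc tangentIntercept f f' (l * x) = D (l * x) * f (l * x) ^ 2 := (hD _ (by positivity)).symm
    _ ≤ 2 * x⁻¹ * D l * (x * f l) ^ 2 := by gcongr
    _ = 2 * x * (D l * f l ^ 2) := by field_simp
    _ = 2 * x * tangentIntercept f f' l := by rw [hD l hl]

lemma IsSupergradient.eventually_tangentIntercept_mul_inv_le (hf : IsSupergradient f f')
    (hpos : ∀ l, 0 < l → 0 < f l)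
    (hD : ∀ l, 0 < l → D l * f l ^ 2 = tangentIntercept f f' l)
    (hreg : ∀ x, 0 < x → Tendsto (fun l => D (l * x) / D l) atTop (𝓝 x⁻¹)) (hx : 0 < x) :
    ∀ᶠ l in atTop, tangentIntercept f f' (l * x⁻¹) ≤ 8 * x⁻¹ * tangentIntercept f f' l := by
  have hlim := (hreg x⁻¹ (inv_pos.2 hx)).eventually_le_const (u := 2 * x)
    (by rw [inv_inv]; linarith)
  filter_upwards [hlim, hf.eventually_tangentIntercept_le hpos hD hreg (inv_pos.2 hx),
    hf.eventually_pos_of_tendsto_div hpos hD hreg,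
    eventually_gt_atTop 0] with l hratio hg hDl hl
  have hDx : D (l * x⁻¹) ≤ 2 * x * D l := (div_le_iff₀ hDl).1 hratio
  have hfx : f (l * x⁻¹) ≤ 2 * x⁻¹ * f l := by
    linarith [hf.map_mul_inv_le (fun l hl => (hpos l hl).le) hl hx]
  have hfx0 := hpos (l * x⁻¹) (by positivity)
  calc tangentIntercept f f' (l * x⁻¹) = D (l * x⁻¹) * f (l * x⁻¹) ^ 2 :=
        (hD _ (by positivity)).symm
    _ ≤ 2 * x * D l * (2 * x⁻¹ * f l) ^ 2 := by gcongr
    _ = 8 * x⁻¹ * (D l * f l ^ 2) := by field_simp; ring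
    _ = 8 * x⁻¹ * tangentIntercept f f' l := by rw [hD l hl]

end Supergradient

section Kernels

/-- The function `w` with `∫ w (l t) ν(dt) = φ(l) - l φ'(l)` for the Laplace exponent `φ` of a
subordinator with Lévy measure `ν`. -/
noncomputable def interceptKernel (s : ℝ) : ℝ :=
  1 - (1 + s) * Real.exp (-s)

/-- The Gaussian heat kernel `(4πs)^(-d/2) exp(-|x|²/(4s))` of `ℝᵈ` at `|x| = 1`, as a function of
the time `s`. The dimension `d` may be any real number. -/
noncomputable def unitHeatKernel (d s : ℝ) : ℝ :=
  (4 * Real.pi * s) ^ (-d / 2) * Real.exp (-(1 / (4 * s)))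

variable {d s x : ℝ}

lemma continuous_interceptKernel : Continuous interceptKernel := by
  unfold interceptKernel; fun_prop

lemma interceptKernel_le_min (hs : 0 ≤ s) : interceptKernel s ≤ min 1 (s ^ 2) := by
  have hexp := Real.one_sub_le_exp_neg s
  unfold interceptKernel
  refine le_min ?_ (by nlinarith)
  have : 0 ≤ (1 + s) * Real.exp (-s) := by positivity
  linarith

lemma min_le_mul_interceptKernel (hs : 0 ≤ s) : min 1 (s ^ 2) ≤ 5 * interceptKernel s := by
  have hquad := Real.quadratic_le_exp_of_nonneg hs
  have hden : 0 < 1 + s + s ^ 2 / 2 := by positivity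
  have hexp : Real.exp (-s) ≤ 1 / (1 + s + s ^ 2 / 2) := by
    rw [Real.exp_neg, ← one_div]
    exact one_div_le_one_div_of_le hden hquad
  have hlower : s ^ 2 / 2 / (1 + s + s ^ 2 / 2) ≤ interceptKernel s := by
    calc s ^ 2 / 2 / (1 + s + s ^ 2 / 2) = 1 - (1 + s) * (1 / (1 + s + s ^ 2 / 2)) := by
          field_simp; ring
      _ ≤ interceptKernel s := by unfold interceptKernel; gcongr
  suffices h : min 1 (s ^ 2) ≤ 5 * (s ^ 2 / 2 / (1 + s + s ^ 2 / 2)) by linarith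
  rw [← mul_div_assoc, le_div_iff₀ hden]
  rcases le_total s 1 with h1 | h1
  · rw [min_eq_right (pow_le_one₀ hs h1)]
    have : 1 + s + s ^ 2 / 2 ≤ 5 / 2 := by nlinarith
    nlinarith [sq_nonneg s]
  · rw [min_eq_left (one_le_pow₀ h1)]
    nlinarith

lemma interceptKernel_nonneg (hs : 0 ≤ s) : 0 ≤ interceptKernel s := by
  have : 0 ≤ min 1 (s ^ 2) := by positivity
  linarith [min_le_mul_interceptKernel hs]

lemma interceptKernel_le_mul_of_mul_le_one (hs : 0 ≤ s) (hx : 0 < x) (hsx : s * x ≤ 1) :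
    interceptKernel s ≤ 5 * (x ^ 2)⁻¹ * interceptKernel (s * x) := by
  have hsx0 : 0 ≤ s * x := by positivity
  calc interceptKernel s ≤ s ^ 2 := (interceptKernel_le_min hs).trans (min_le_right _ _)
    _ = (x ^ 2)⁻¹ * min 1 ((s * x) ^ 2) := by
        rw [min_eq_right (pow_le_one₀ hsx0 hsx)]; field_simp
    _ ≤ (x ^ 2)⁻¹ * (5 * interceptKernel (s * x)) := by
        gcongr; exact min_le_mul_interceptKernel hsx0
    _ = 5 * (x ^ 2)⁻¹ * interceptKernel (s * x) := by ring

lemma interceptKernel_le_mul_of_le (hx : 0 < x) (hxs : x ≤ s) :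
    interceptKernel s ≤ 5 * interceptKernel (s * x⁻¹) := by
  have hone : 1 ≤ s * x⁻¹ := by rwa [← div_eq_mul_inv, one_le_div hx]
  calc interceptKernel s ≤ 1 := (interceptKernel_le_min (hx.le.trans hxs)).trans (min_le_left _ _)
    _ = min 1 ((s * x⁻¹) ^ 2) := (min_eq_left (one_le_pow₀ hone)).symm
    _ ≤ 5 * interceptKernel (s * x⁻¹) := min_le_mul_interceptKernel (zero_le_one.trans hone)

lemma exists_interceptKernel_le_add {k : ℝ → ℝ} (hk : ContinuousOn k (Ioi 0))
    (hkpos : ∀ s, 0 < s → 0 < k s) (hx : 0 < x) :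
    ∃ c, 0 < c ∧ ∀ s, 0 < s → interceptKernel s ≤
      5 * (x ^ 2)⁻¹ * interceptKernel (s * x) + 5 * interceptKernel (s * x⁻¹) + c * k s := by
  have hIcc : Icc x⁻¹ x ⊆ Ioi 0 := fun s hs => (inv_pos.2 hx).trans_le hs.1
  obtain ⟨m, hm, hmk⟩ :=
    isCompact_Icc.exists_forall_le' (hk.mono hIcc) fun s hs => hkpos s (hIcc hs)
  refine ⟨m⁻¹, inv_pos.2 hm, fun s hs => ?_⟩
  have hsmall : 0 ≤ 5 * (x ^ 2)⁻¹ * interceptKernel (s * x) :=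
    mul_nonneg (by positivity) (interceptKernel_nonneg (by positivity))
  have hlarge : 0 ≤ 5 * interceptKernel (s * x⁻¹) :=
    mul_nonneg (by norm_num) (interceptKernel_nonneg (by positivity))
  have hmiddle : 0 ≤ m⁻¹ * k s := mul_nonneg (by positivity) (hkpos s hs).le
  rcases le_or_gt s x⁻¹ with h1 | h1
  · have := interceptKernel_le_mul_of_mul_le_one hs.le hx ((le_inv_mul_iff₀' hx).1 (by simpa))
    linarith
  rcases le_or_gt x s with h2 | h2
  · linarith [interceptKernel_le_mul_of_le hx h2]
  · have hone : 1 ≤ m⁻¹ * k s := (one_le_inv_mul₀ hm).2 (hmk s ⟨h1.le, h2.le⟩)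
    linarith [(interceptKernel_le_min hs.le).trans (min_le_left _ _)]

lemma continuousOn_unitHeatKernel (d : ℝ) : ContinuousOn (unitHeatKernel d) (Ioi 0) := by
  intro s (hs : 0 < s)
  unfold unitHeatKernel
  have : 4 * Real.pi * s ≠ 0 := by positivity
  have : 4 * s ≠ 0 := by positivity
  fun_prop (disch := first | assumption | exact Or.inl ‹_›)

lemma unitHeatKernel_pos (d : ℝ) (hs : 0 < s) : 0 < unitHeatKernel d s := by
  unfold unitHeatKernel; positivity

lemma rpow_mul_exp_neg_le {p y : ℝ} (hp : 0 ≤ p) (hy : 0 ≤ y) :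
    y ^ p * Real.exp (-y) ≤ (p + 1) ^ p := by
  have hexp : y ≤ (p + 1) * Real.exp (y / (p + 1)) := by
    rw [← div_le_iff₀' (by positivity)]
    linarith [Real.add_one_le_exp (y / (p + 1))]
  rw [Real.exp_neg, ← div_eq_mul_inv, div_le_iff₀ (Real.exp_pos y)]
  calc y ^ p ≤ ((p + 1) * Real.exp (y / (p + 1))) ^ p := by gcongr
    _ = (p + 1) ^ p * Real.exp (y / (p + 1) * p) := by
        rw [Real.mul_rpow (by positivity) (by positivity), ← Real.exp_mul]
    _ ≤ (p + 1) ^ p * Real.exp y := by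
        gcongr
        rw [div_mul_eq_mul_div, div_le_iff₀ (by positivity)]
        nlinarith

lemma unitHeatKernel_eq (d : ℝ) (hs : 0 < s) :
    unitHeatKernel d s =
      Real.pi ^ (-d / 2) * ((1 / (4 * s)) ^ (d / 2) * Real.exp (-(1 / (4 * s)))) := by
  have : 4 * Real.pi * s = Real.pi * (1 / (4 * s))⁻¹ := by field_simp
  rw [unitHeatKernel, this, Real.mul_rpow (by positivity) (by positivity),
    Real.inv_rpow (by positivity), ← Real.rpow_neg (by positivity), neg_div, neg_neg, mul_assoc]

lemma exists_unitHeatKernel_le_mul_min (hd : 0 ≤ d) :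
    ∃ C, 0 < C ∧ ∀ s, 0 < s → unitHeatKernel d s ≤ C * min 1 (s ^ 2) := by
  obtain ⟨C₁, hC₁, hbounded⟩ : ∃ C, 0 < C ∧ ∀ s, 0 < s → unitHeatKernel d s ≤ C := by
    refine ⟨Real.pi ^ (-d / 2) * (d / 2 + 1) ^ (d / 2), by positivity, fun s hs => ?_⟩
    rw [unitHeatKernel_eq d hs]
    gcongr
    exact rpow_mul_exp_neg_le (by positivity) (by positivity)
  obtain ⟨C₂, hquadratic⟩ : ∃ C, ∀ s, 0 < s → unitHeatKernel d s ≤ C * s ^ 2 := by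
    refine ⟨16 * (Real.pi ^ (-d / 2) * (d / 2 + 2 + 1) ^ (d / 2 + 2)), fun s hs => ?_⟩
    have hy : 0 < 1 / (4 * s) := by positivity
    calc unitHeatKernel d s = 16 * (Real.pi ^ (-d / 2) *
            ((1 / (4 * s)) ^ (d / 2 + 2) * Real.exp (-(1 / (4 * s))))) * s ^ 2 := by
          rw [unitHeatKernel_eq d hs, Real.rpow_add hy, Real.rpow_two]; field_simp; norm_num
      _ ≤ _ := by gcongr; exact rpow_mul_exp_neg_le (by positivity) hy.le
  refine ⟨max C₁ C₂, lt_max_of_lt_left hC₁, fun s hs => ?_⟩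
  rw [mul_min_of_nonneg _ _ (le_max_of_le_left hC₁.le), mul_one]
  exact le_min ((hbounded s hs).trans (le_max_left _ _))
    ((hquadratic s hs).trans (by gcongr; exact le_max_right _ _))

end Kernels

section LevyMeasure

variable {ν : Measure ℝ} {h k φ φ' : ℝ → ℝ} {C l x : ℝ}

lemma integrableOn_comp_mul (hν : IntegrableOn (fun t => min 1 t) (Ioi 0) ν)
    (hh : ContinuousOn h (Ioi 0)) (hC : ∀ s, 0 < s → |h s| ≤ C * min 1 s) (hl : 0 < l) :
    IntegrableOn (fun t => h (l * t)) (Ioi 0) ν := by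
  have hmaps : MapsTo (fun t => l * t) (Ioi 0) (Ioi 0) := fun t ht => mul_pos hl ht
  have hmeas : AEStronglyMeasurable (fun t => h (l * t)) (ν.restrict (Ioi 0)) :=
    (hh.comp (by fun_prop) hmaps).aestronglyMeasurable measurableSet_Ioi
  refine ((hν.const_mul (max 1 l)).const_mul C).mono' hmeas ?_
  filter_upwards [ae_restrict_mem measurableSet_Ioi] with t ht
  have ht0 : 0 < t := ht
  have hC0 : 0 ≤ C := nonneg_of_mul_nonneg_left ((abs_nonneg _).trans (hC 1 one_pos)) (by simp)
  have hmin : min 1 (l * t) ≤ max 1 l * min 1 t := by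
    rw [mul_min_of_nonneg _ _ (by positivity), mul_one]
    exact min_le_min (le_max_left _ _) (by gcongr; exact le_max_right _ _)
  exact (hC _ (mul_pos hl ht0)).trans (by gcongr)

lemma integrableOn_one_sub_exp (hν : IntegrableOn (fun t => min 1 t) (Ioi 0) ν) (hl : 0 < l) :
    IntegrableOn (fun t => 1 - Real.exp (-(l * t))) (Ioi 0) ν := by
  refine integrableOn_comp_mul (h := fun s => 1 - Real.exp (-s)) (C := 1) hν (by fun_prop)
    (fun s hs => ?_) hl
  have hexp : Real.exp (-s) ≤ 1 := by simpa using hs.le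
  rw [abs_of_nonneg (by linarith), one_mul]
  exact le_min (by linarith [Real.exp_pos (-s)]) (by linarith [Real.one_sub_le_exp_neg s])

lemma integrableOn_mul_exp (hν : IntegrableOn (fun t => min 1 t) (Ioi 0) ν) (hl : 0 < l) :
    IntegrableOn (fun t => t * Real.exp (-(l * t))) (Ioi 0) ν := by
  have hbound (s : ℝ) (hs : 0 < s) : |s * Real.exp (-s)| ≤ 1 * min 1 s := by
    rw [abs_of_pos (by positivity), one_mul]
    refine le_min ?_ (mul_le_of_le_one_right hs.le (by simpa using hs.le))
    rw [Real.exp_neg, ← div_eq_mul_inv, div_le_one (Real.exp_pos s)]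
    linarith [Real.add_one_le_exp s]
  have hint := (integrableOn_comp_mul (h := fun s => s * Real.exp (-s)) hν (by fun_prop)
    hbound hl).const_mul l⁻¹
  refine hint.congr (Eventually.of_forall fun t => ?_)
  field_simp

lemma integrableOn_comp_mul_of_le_min_sq (hν : IntegrableOn (fun t => min 1 t) (Ioi 0) ν)
    (hk : ContinuousOn k (Ioi 0)) (hk0 : ∀ s, 0 < s → 0 ≤ k s)
    (hC : ∀ s, 0 < s → k s ≤ C * min 1 (s ^ 2)) (hl : 0 < l) :
    IntegrableOn (fun t => k (l * t)) (Ioi 0) ν := by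
  have hC0 : 0 ≤ C := by simpa using (hk0 1 one_pos).trans (hC 1 one_pos)
  refine integrableOn_comp_mul (C := C) hν hk (fun s hs => ?_) hl
  rw [abs_of_nonneg (hk0 s hs)]
  refine (hC s hs).trans (mul_le_mul_of_nonneg_left (le_min (min_le_left _ _) ?_) hC0)
  rcases le_total s 1 with hs1 | hs1
  · exact (min_le_right _ _).trans (pow_le_of_le_one hs.le hs1 two_ne_zero)
  · exact (min_le_left _ _).trans hs1

lemma integrableOn_interceptKernel (hν : IntegrableOn (fun t => min 1 t) (Ioi 0) ν) (hl : 0 < l) :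
    IntegrableOn (fun t => interceptKernel (l * t)) (Ioi 0) ν :=
  integrableOn_comp_mul_of_le_min_sq hν continuous_interceptKernel.continuousOn
    (fun _ hs => interceptKernel_nonneg hs.le)
    (fun _ hs => (interceptKernel_le_min hs.le).trans_eq (one_mul _).symm) hl

lemma setIntegral_kernel_le_mul_interceptKernel
    (hν : IntegrableOn (fun t => min 1 t) (Ioi 0) ν)
    (hkint : IntegrableOn (fun t => k (l * t)) (Ioi 0) ν) (hC0 : 0 ≤ C)
    (hC : ∀ s, 0 < s → k s ≤ C * min 1 (s ^ 2)) (hl : 0 < l) :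
    ∫ t in Ioi 0, k (l * t) ∂ν ≤ 5 * C * ∫ t in Ioi 0, interceptKernel (l * t) ∂ν := by
  rw [← integral_const_mul]
  refine setIntegral_mono_on hkint ((integrableOn_interceptKernel hν hl).const_mul _)
    measurableSet_Ioi fun t ht => ?_
  have hlt : 0 < l * t := mul_pos hl ht
  calc k (l * t) ≤ C * min 1 ((l * t) ^ 2) := hC _ hlt
    _ ≤ C * (5 * interceptKernel (l * t)) := by
        gcongr; exact min_le_mul_interceptKernel hlt.le
    _ = 5 * C * interceptKernel (l * t) := by ring

lemma exists_setIntegral_interceptKernel_le_add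
    (hν : IntegrableOn (fun t => min 1 t) (Ioi 0) ν)
    (hk : ContinuousOn k (Ioi 0)) (hkpos : ∀ s, 0 < s → 0 < k s)
    (hkint : ∀ l, 0 < l → IntegrableOn (fun t => k (l * t)) (Ioi 0) ν) (hx : 0 < x) :
    ∃ c, 0 < c ∧ ∀ l, 0 < l → ∫ t in Ioi 0, interceptKernel (l * t) ∂ν ≤
      5 * (x ^ 2)⁻¹ * (∫ t in Ioi 0, interceptKernel (l * x * t) ∂ν) +
        5 * (∫ t in Ioi 0, interceptKernel (l * x⁻¹ * t) ∂ν) +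
        c * ∫ t in Ioi 0, k (l * t) ∂ν := by
  obtain ⟨c, hc, hsplit⟩ := exists_interceptKernel_le_add hk hkpos hx
  refine ⟨c, hc, fun l hl => ?_⟩
  have hint {y : ℝ} (hy : 0 < y) (a : ℝ) :=
    (integrableOn_interceptKernel hν (mul_pos hl hy)).const_mul a
  have hint_x := hint hx (5 * (x ^ 2)⁻¹)
  have hint_inv := hint (inv_pos.2 hx) 5
  have hint_sum : Integrable (fun t => 5 * (x ^ 2)⁻¹ * interceptKernel (l * x * t) +
      5 * interceptKernel (l * x⁻¹ * t)) (ν.restrict (Ioi 0)) := hint_x.add hint_inv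
  have hint_k := (hkint l hl).const_mul c
  simp only [← integral_const_mul]
  rw [← integral_add hint_x hint_inv, ← integral_add hint_sum hint_k]
  refine setIntegral_mono_on (integrableOn_interceptKernel hν hl)
    (hint_sum.add hint_k) measurableSet_Ioi fun t ht => ?_
  rw [mul_right_comm l x, mul_right_comm l x⁻¹]
  exact hsplit (l * t) (mul_pos hl ht)

lemma exists_eventually_setIntegral_interceptKernel_le
    (hν : IntegrableOn (fun t => min 1 t) (Ioi 0) ν)
    (hk : ContinuousOn k (Ioi 0)) (hkpos : ∀ s, 0 < s → 0 < k s)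
    (hkint : ∀ l, 0 < l → IntegrableOn (fun t => k (l * t)) (Ioi 0) ν) {A : ℝ}
    (hmul : ∀ x, 1 ≤ x → ∀ᶠ l in atTop, ∫ t in Ioi 0, interceptKernel (l * x * t) ∂ν ≤
      A * x * ∫ t in Ioi 0, interceptKernel (l * t) ∂ν)
    (hinv : ∀ x, 1 ≤ x → ∀ᶠ l in atTop, ∫ t in Ioi 0, interceptKernel (l * x⁻¹ * t) ∂ν ≤
      A * x⁻¹ * ∫ t in Ioi 0, interceptKernel (l * t) ∂ν) :
    ∃ c, 0 < c ∧ ∀ᶠ l in atTop,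
      c * ∫ t in Ioi 0, interceptKernel (l * t) ∂ν ≤ ∫ t in Ioi 0, k (l * t) ∂ν := by
  -- `10 A x⁻¹ ≤ 1/2`, so that the first two terms of the splitting are absorbed.
  set x := max 1 (20 * A)
  have hx1 : 1 ≤ x := le_max_left _ _
  have hx : 0 < x := by positivity
  have hAx : A * x⁻¹ ≤ 1 / 20 := by
    rw [← div_eq_mul_inv, div_le_iff₀ hx]
    linarith [le_max_right 1 (20 * A)]
  obtain ⟨c, hc, hsplit⟩ := exists_setIntegral_interceptKernel_le_add hν hk hkpos hkint hx
  refine ⟨(2 * c)⁻¹, by positivity, ?_⟩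
  filter_upwards [hmul x hx1, hinv x hx1, eventually_gt_atTop 0] with l hmul_l hinv_l hl
  set G := ∫ t in Ioi 0, interceptKernel (l * t) ∂ν
  have hG : 0 ≤ G :=
    setIntegral_nonneg measurableSet_Ioi fun t ht => interceptKernel_nonneg (mul_pos hl ht).le
  rw [inv_mul_le_iff₀ (by positivity)]
  suffices h : G ≤ 1 / 2 * G + c * ∫ t in Ioi 0, k (l * t) ∂ν by linarith
  calc G ≤ 5 * (x ^ 2)⁻¹ * (A * x * G) + 5 * (A * x⁻¹ * G) + c * ∫ t in Ioi 0, k (l * t) ∂ν := by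
        refine (hsplit l hl).trans ?_
        gcongr
    _ = 10 * (A * x⁻¹) * G + c * ∫ t in Ioi 0, k (l * t) ∂ν := by field_simp; ring
    _ ≤ 1 / 2 * G + c * ∫ t in Ioi 0, k (l * t) ∂ν := by gcongr; linarith

lemma setIntegral_one_sub_exp_pos (hν : IntegrableOn (fun t => min 1 t) (Ioi 0) ν)
    (hν0 : ν (Ioi 0) ≠ 0) (hl : 0 < l) : 0 < ∫ t in Ioi 0, (1 - Real.exp (-(l * t))) ∂ν := by
  have hpos : ∀ t ∈ Ioi (0 : ℝ), 0 < 1 - Real.exp (-(l * t)) := fun t ht => by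
    simpa using mul_pos hl ht
  have hsupp : Function.support (fun t => 1 - Real.exp (-(l * t))) ∩ Ioi 0 = Ioi 0 :=
    inter_eq_right.2 fun t ht => (hpos t ht).ne'
  rw [setIntegral_pos_iff_support_of_nonneg_ae
      ((ae_restrict_mem measurableSet_Ioi).mono fun t ht => (hpos t ht).le)
      (integrableOn_one_sub_exp hν hl), hsupp]
  exact pos_iff_ne_zero.2 hν0

lemma exp_neg_mul_sub_exp_neg_mul_le (a b t : ℝ) :
    Real.exp (-(a * t)) - Real.exp (-(b * t)) ≤ (b - a) * (t * Real.exp (-(a * t))) := by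
  have hfactor : Real.exp (-(b * t)) = Real.exp (-(a * t)) * Real.exp (-((b - a) * t)) := by
    rw [← Real.exp_add]; congr 1; ring
  rw [hfactor]
  nlinarith [Real.exp_pos (-(a * t)), Real.one_sub_le_exp_neg ((b - a) * t)]

lemma isSupergradient_of_laplaceExponent (hν : IntegrableOn (fun t => min 1 t) (Ioi 0) ν)
    (hφ : ∀ l, 0 < l → φ l = ∫ t in Ioi 0, (1 - Real.exp (-(l * t))) ∂ν)
    (hφ' : ∀ l, 0 < l → φ' l = ∫ t in Ioi 0, t * Real.exp (-(l * t)) ∂ν) :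
    IsSupergradient φ φ' := by
  intro a b ha hb
  have hint_a := integrableOn_one_sub_exp hν ha
  have hint_b := integrableOn_one_sub_exp hν hb
  have hint' := (integrableOn_mul_exp hν ha).const_mul (b - a)
  rw [hφ a ha, hφ b hb, hφ' a ha, ← integral_const_mul, ← integral_add hint_a hint']
  refine setIntegral_mono hint_b (hint_a.add hint') fun t => ?_
  have := exp_neg_mul_sub_exp_neg_mul_le a b t
  dsimp only
  linarith

lemma hasDerivAt_of_laplaceExponent (hν : IntegrableOn (fun t => min 1 t) (Ioi 0) ν)
    (hφ : ∀ l, 0 < l → φ l = ∫ t in Ioi 0, (1 - Real.exp (-(l * t))) ∂ν)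
    (hφ' : ∀ l, 0 < l → φ' l = ∫ t in Ioi 0, t * Real.exp (-(l * t)) ∂ν) (hl : 0 < l) :
    HasDerivAt φ (φ' l) l := by
  have hnhds : Ioi (l / 2) ∈ 𝓝 l := Ioi_mem_nhds (half_lt_self hl)
  have hderiv (t s : ℝ) :
      HasDerivAt (fun s => 1 - Real.exp (-(s * t))) (t * Real.exp (-(s * t))) s := by
    have := ((hasDerivAt_mul_const t (x := s)).fun_neg.exp).const_sub 1
    exact this.congr_deriv (by ring)
  have hbound : ∀ᵐ t ∂ν.restrict (Ioi 0), ∀ s ∈ Ioi (l / 2),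
      ‖t * Real.exp (-(s * t))‖ ≤ t * Real.exp (-(l / 2 * t)) := by
    filter_upwards [ae_restrict_mem measurableSet_Ioi] with t (ht : 0 < t) s hs
    rw [Real.norm_of_nonneg (by positivity)]
    gcongr
    exact (mem_Ioi.1 hs).le
  have hint := hasDerivAt_integral_of_dominated_loc_of_deriv_le hnhds
    (Eventually.of_forall fun s => (by fun_prop : Continuous fun t =>
      1 - Real.exp (-(s * t))).aestronglyMeasurable)
    (integrableOn_one_sub_exp hν hl)
    (by fun_prop : Continuous fun t => t * Real.exp (-(l * t))).aestronglyMeasurable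
    hbound (integrableOn_mul_exp hν (half_pos hl))
    (Eventually.of_forall fun t s _ => hderiv t s)
  rw [hφ' l hl]
  exact hint.2.congr_of_eventuallyEq ((eventually_gt_nhds hl).mono hφ)

lemma tangentIntercept_eq_setIntegral (hν : IntegrableOn (fun t => min 1 t) (Ioi 0) ν)
    (hφ : ∀ l, 0 < l → φ l = ∫ t in Ioi 0, (1 - Real.exp (-(l * t))) ∂ν)
    (hφ' : ∀ l, 0 < l → φ' l = ∫ t in Ioi 0, t * Real.exp (-(l * t)) ∂ν) (hl : 0 < l) :
    tangentIntercept φ φ' l = ∫ t in Ioi 0, interceptKernel (l * t) ∂ν := by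
  rw [tangentIntercept, hφ l hl, hφ' l hl, ← integral_const_mul,
    ← integral_sub (integrableOn_one_sub_exp hν hl) ((integrableOn_mul_exp hν hl).const_mul l)]
  congr 1 with t
  unfold interceptKernel
  ring

end LevyMeasure

section WithDensity

variable {α : Type*} [MeasurableSpace α] {m : Measure α} {s : Set α} {f : α → ℝ}

lemma setIntegral_withDensity_ofReal (hs : MeasurableSet s) (hf : AEMeasurable f (m.restrict s))
    (hf0 : ∀ x ∈ s, 0 ≤ f x) (h : α → ℝ) :
    ∫ x in s, h x ∂m.withDensity (fun x => ENNReal.ofReal (f x)) = ∫ x in s, h x * f x ∂m := by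
  rw [setIntegral_withDensity_eq_setIntegral_toReal_smul₀ hf.ennreal_ofReal (by simp) h hs]
  refine setIntegral_congr_fun hs fun x hx => ?_
  simp only [ENNReal.toReal_ofReal (hf0 x hx), smul_eq_mul, mul_comm]

lemma integrableOn_withDensity_ofReal_iff (hs : MeasurableSet s)
    (hf : AEMeasurable f (m.restrict s)) (hf0 : ∀ x ∈ s, 0 ≤ f x) {h : α → ℝ} :
    IntegrableOn h s (m.withDensity fun x => ENNReal.ofReal (f x)) ↔
      IntegrableOn (fun x => h x * f x) s m := by
  rw [IntegrableOn, restrict_withDensity hs,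
    integrable_withDensity_iff_integrable_smul₀' hf.ennreal_ofReal (by simp), ← IntegrableOn]
  refine integrableOn_congr_fun (fun x hx => ?_) hs
  simp only [ENNReal.toReal_ofReal (hf0 x hx), smul_eq_mul, mul_comm]

end WithDensity

section JumpDensity

variable {ν : Measure ℝ} {d l r : ℝ} {φ φ' ψ' : ℝ → ℝ}

lemma deriv_div_mul_sq_eq_tangentIntercept {D : ℝ} (hφ : HasDerivAt φ (φ' l) l)
    (hψ : HasDerivAt (fun s => s / φ s) D l) (hne : φ l ≠ 0) :
    D * φ l ^ 2 = tangentIntercept φ φ' l := by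
  rw [hψ.unique ((hasDerivAt_id l).fun_div hφ hne), tangentIntercept]
  field_simp
  simp only [id_eq]
  ring

lemma measure_Ioi_ne_zero_of_tendsto_div
    (hφ : ∀ l, 0 < l → φ l = ∫ t in Ioi 0, (1 - Real.exp (-(l * t))) ∂ν)
    (hψ' : ∀ l, 0 < l → HasDerivAt (fun s => s / φ s) (ψ' l) l)
    (hreg : ∀ x, 0 < x → Tendsto (fun l => ψ' (l * x) / ψ' l) atTop (𝓝 x⁻¹)) :
    ν (Ioi 0) ≠ 0 := by
  intro hzero
  have hφ0 (l : ℝ) (hl : 0 < l) : φ l = 0 := by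
    rw [hφ l hl, Measure.restrict_eq_zero.2 hzero, integral_zero_measure]
  obtain ⟨l, hne, hl⟩ :=
    ((eventually_ne_zero_of_tendsto_div hreg).and (eventually_gt_atTop 0)).exists
  have hquotient : (fun s => s / φ s) =ᶠ[𝓝 l] fun _ => 0 :=
    (eventually_gt_nhds hl).mono fun s hs => by simp only [hφ0 s hs, div_zero]
  exact hne ((hψ' l hl).unique ((hasDerivAt_const l 0).congr_of_eventuallyEq hquotient))

lemma exists_eventually_tangentIntercept_le_setIntegral_unitHeatKernel
    (hν : IntegrableOn (fun t => min 1 t) (Ioi 0) ν) (hν0 : ν (Ioi 0) ≠ 0)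
    (hkint : ∀ l, 0 < l → IntegrableOn (fun t => unitHeatKernel d (l * t)) (Ioi 0) ν)
    (hφ : ∀ l, 0 < l → φ l = ∫ t in Ioi 0, (1 - Real.exp (-(l * t))) ∂ν)
    (hφ' : ∀ l, 0 < l → φ' l = ∫ t in Ioi 0, t * Real.exp (-(l * t)) ∂ν)
    (hψ' : ∀ l, 0 < l → HasDerivAt (fun s => s / φ s) (ψ' l) l)
    (hreg : ∀ x, 0 < x → Tendsto (fun l => ψ' (l * x) / ψ' l) atTop (𝓝 x⁻¹)) :
    ∃ c, 0 < c ∧ ∀ᶠ l in atTop,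
      c * tangentIntercept φ φ' l ≤ ∫ t in Ioi 0, unitHeatKernel d (l * t) ∂ν := by
  have hconcave := isSupergradient_of_laplaceExponent hν hφ hφ'
  have hpos (l : ℝ) (hl : 0 < l) : 0 < φ l := hφ l hl ▸ setIntegral_one_sub_exp_pos hν hν0 hl
  have hD (l : ℝ) (hl : 0 < l) : ψ' l * φ l ^ 2 = tangentIntercept φ φ' l :=
    deriv_div_mul_sq_eq_tangentIntercept (hasDerivAt_of_laplaceExponent hν hφ hφ' hl) (hψ' l hl)
      (hpos l hl).ne'
  have hg {l : ℝ} (hl : 0 < l) := tangentIntercept_eq_setIntegral hν hφ hφ' hl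
  obtain ⟨c, hc, hle⟩ := exists_eventually_setIntegral_interceptKernel_le (A := 8) hν
    (continuousOn_unitHeatKernel d) (fun _ => unitHeatKernel_pos d) hkint
    (fun x hx => by
      filter_upwards [hconcave.eventually_tangentIntercept_mul_le hpos hD hreg hx,
        eventually_gt_atTop 0] with l hgrowth hl
      have := hconcave.tangentIntercept_nonneg (fun l hl => (hpos l hl).le) hl
      rw [← hg hl, ← hg (by positivity)]
      exact hgrowth.trans (by gcongr; norm_num))
    (fun x hx => by
      filter_upwards [hconcave.eventually_tangentIntercept_mul_inv_le hpos hD hreg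
        (zero_lt_one.trans_le hx), eventually_gt_atTop 0] with l hgrowth hl
      rwa [← hg hl, ← hg (by positivity)])
  refine ⟨c, hc, ?_⟩
  filter_upwards [hle, eventually_gt_atTop 0] with l hle_l hl
  rwa [hg hl]

lemma exists_eventually_setIntegral_unitHeatKernel_bounds (hd : 0 ≤ d)
    (hν : IntegrableOn (fun t => min 1 t) (Ioi 0) ν)
    (hφ : ∀ l, 0 < l → φ l = ∫ t in Ioi 0, (1 - Real.exp (-(l * t))) ∂ν)
    (hφ' : ∀ l, 0 < l → φ' l = ∫ t in Ioi 0, t * Real.exp (-(l * t)) ∂ν)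
    (hψ' : ∀ l, 0 < l → HasDerivAt (fun s => s / φ s) (ψ' l) l)
    (hreg : ∀ x, 0 < x → Tendsto (fun l => ψ' (l * x) / ψ' l) atTop (𝓝 x⁻¹)) :
    ∃ c C, 0 < c ∧ c ≤ C ∧ ∀ᶠ l in atTop,
      c * tangentIntercept φ φ' l ≤ ∫ t in Ioi 0, unitHeatKernel d (l * t) ∂ν ∧
      ∫ t in Ioi 0, unitHeatKernel d (l * t) ∂ν ≤ C * tangentIntercept φ φ' l := by
  obtain ⟨K, hK, hbound⟩ := exists_unitHeatKernel_le_mul_min hd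
  have hkint (l : ℝ) (hl : 0 < l) : IntegrableOn (fun t => unitHeatKernel d (l * t)) (Ioi 0) ν :=
    integrableOn_comp_mul_of_le_min_sq hν (continuousOn_unitHeatKernel d)
      (fun _ hs => (unitHeatKernel_pos d hs).le) hbound hl
  have hν0 := measure_Ioi_ne_zero_of_tendsto_div hφ hψ' hreg
  obtain ⟨c, hc, hlower⟩ := exists_eventually_tangentIntercept_le_setIntegral_unitHeatKernel
    hν hν0 hkint hφ hφ' hψ' hreg
  refine ⟨c, max c (5 * K), hc, le_max_left _ _, ?_⟩
  filter_upwards [hlower, eventually_gt_atTop 0] with l hlower_l hl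
  refine ⟨hlower_l, ?_⟩
  have hg0 : 0 ≤ ∫ t in Ioi 0, interceptKernel (l * t) ∂ν :=
    setIntegral_nonneg measurableSet_Ioi fun t ht => interceptKernel_nonneg (mul_pos hl ht).le
  rw [tangentIntercept_eq_setIntegral hν hφ hφ' hl]
  exact (setIntegral_kernel_le_mul_interceptKernel hν (hkint l hl) hK.le hbound hl).trans
    (by gcongr; exact le_max_right _ _)

lemma heatKernel_eq_rpow_mul_unitHeatKernel (d : ℝ) {t : ℝ} (hr : 0 < r) (ht : 0 < t) :
    (4 * Real.pi * t) ^ (-d / 2) * Real.exp (-(r ^ 2 / (4 * t))) =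
      r ^ (-d) * unitHeatKernel d (r ^ (-2 : ℝ) * t) := by
  have hrpow : r ^ (-d) = (r ^ 2) ^ (-d / 2) := by
    rw [← Real.rpow_two, ← Real.rpow_mul hr.le]; congr 1; ring
  rw [unitHeatKernel, hrpow, Real.rpow_neg hr.le, Real.rpow_two, ← mul_assoc,
    ← Real.mul_rpow (by positivity) (by positivity)]
  congr 2 <;> field_simp

lemma setIntegral_heatKernel_eq_rpow_mul (ν : Measure ℝ) (d : ℝ) (hr : 0 < r) :
    ∫ t in Ioi 0, (4 * Real.pi * t) ^ (-d / 2) * Real.exp (-(r ^ 2 / (4 * t))) ∂ν =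
      r ^ (-d) * ∫ t in Ioi 0, unitHeatKernel d (r ^ (-2 : ℝ) * t) ∂ν := by
  rw [← integral_const_mul]
  exact setIntegral_congr_fun measurableSet_Ioi fun t ht =>
    heatKernel_eq_rpow_mul_unitHeatKernel d hr ht

lemma rpow_mul_sub_eq_rpow_mul_tangentIntercept (φ φ' : ℝ → ℝ) (d : ℝ) (hr : 0 < r) :
    r ^ (-d - 2) * (r ^ 2 * φ (r ^ (-2 : ℝ)) - φ' (r ^ (-2 : ℝ))) =
      r ^ (-d) * tangentIntercept φ φ' (r ^ (-2 : ℝ)) := by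
  rw [tangentIntercept, sub_eq_add_neg (-d), Real.rpow_add hr, Real.rpow_neg hr.le 2,
    Real.rpow_two]
  field_simp

end JumpDensity

theorem sbm_jump_asymp_alpha_two_general {d : ℝ} (hd : 0 ≤ d) {ν : Measure ℝ} {φ φ' ψ' j : ℝ → ℝ}
    (hν : IntegrableOn (fun t => min 1 t) (Ioi 0) ν)
    (hφ : ∀ l, 0 < l → φ l = ∫ t in Ioi 0, (1 - Real.exp (-(l * t))) ∂ν)
    (hφ' : ∀ l, 0 < l → φ' l = ∫ t in Ioi 0, t * Real.exp (-(l * t)) ∂ν)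
    (hψ' : ∀ l, 0 < l → HasDerivAt (fun s => s / φ s) (ψ' l) l)
    (hA4 : ∀ x, 0 < x → Tendsto (fun l => ψ' (l * x) / ψ' l) atTop (𝓝 x⁻¹))
    (hj : ∀ r, 0 < r → j r =
      ∫ t in Ioi 0, (4 * Real.pi * t) ^ (-d / 2) * Real.exp (-(r ^ 2 / (4 * t))) ∂ν) :
    ∃ c C r₀ : ℝ, 0 < c ∧ c ≤ C ∧ 0 < r₀ ∧ ∀ r, 0 < r → r < r₀ →
      c * (r ^ (-d - 2) * (r ^ 2 * φ (r ^ (-2 : ℝ)) - φ' (r ^ (-2 : ℝ)))) ≤ j r ∧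
      j r ≤ C * (r ^ (-d - 2) * (r ^ 2 * φ (r ^ (-2 : ℝ)) - φ' (r ^ (-2 : ℝ)))) := by
  obtain ⟨c, C, hc, hcC, hbounds⟩ :=
    exists_eventually_setIntegral_unitHeatKernel_bounds hd hν hφ hφ' hψ' hA4
  have hlim : Tendsto (fun r : ℝ => r ^ (-2 : ℝ)) (𝓝[>] 0) atTop :=
    tendsto_rpow_neg_nhdsGT_zero (by norm_num)
  obtain ⟨r₀, hr₀, hsmall⟩ := mem_nhdsGT_iff_exists_Ioo_subset.1 (hlim.eventually hbounds)
  refine ⟨c, C, r₀, hc, hcC, hr₀, fun r hr hrr₀ => ?_⟩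
  obtain ⟨hlower, hupper⟩ := hsmall ⟨hr, hrr₀⟩
  rw [hj r hr, setIntegral_heatKernel_eq_rpow_mul ν d hr,
    rpow_mul_sub_eq_rpow_mul_tangentIntercept φ φ' d hr, mul_left_comm c, mul_left_comm C]
  exact ⟨by gcongr, by gcongr⟩

/-- Under (A-1) with `α = 2`, (A-3) and (A-4), the Lévy density of the subordinate Brownian
motion satisfies `j(r) ≍ r^{-d-2} (r² φ(r⁻²) - φ'(r⁻²))` as `r → 0+`. -/
theorem sbm_jump_asymp_alpha_two
    (d : ℕ) (hd : 3 ≤ d)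
    (μ φ φ' : ℝ → ℝ)
    (hμpos : ∀ t, 0 < t → 0 < μ t)
    (hμdec : ∀ s t, 0 < s → s ≤ t → μ t ≤ μ s)
    (hμint : IntegrableOn (fun t => min 1 t * μ t) (Ioi 0))
    (hφ : ∀ l, 0 < l → φ l = ∫ t in Ioi (0:ℝ), (1 - Real.exp (-(l * t))) * μ t)
    (hφ' : ∀ l, 0 < l → φ' l = ∫ t in Ioi (0:ℝ), t * Real.exp (-(l * t)) * μ t)
    (hA1 : ∀ x, 0 < x →
      Tendsto (fun l => φ' (l * x) / φ' l) atTop (𝓝 (1 : ℝ)))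
    (u : ℝ → ℝ)
    (hupos : ∀ t, 0 < t → 0 < u t)
    (hudec : ∀ s t, 0 < s → s ≤ t → u t ≤ u s)
    (hu : ∀ l, 0 < l → ∫ t in Ioi (0:ℝ), Real.exp (-(l * t)) * u t = 1 / φ l)
    (ψ' : ℝ → ℝ)
    (hψ' : ∀ l, 0 < l → HasDerivAt (fun s => s / φ s) (ψ' l) l)
    (hA4 : ∀ x, 0 < x →
      Tendsto (fun l => ψ' (l * x) / ψ' l) atTop (𝓝 x⁻¹))
    (j : ℝ → ℝ)
    (hj : ∀ r, 0 < r → j r =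
      ∫ t in Ioi (0:ℝ), (4 * Real.pi * t) ^ (-(d:ℝ) / 2) * Real.exp (-(r ^ 2 / (4 * t))) * μ t) :
    ∃ c C r₀ : ℝ, 0 < c ∧ c ≤ C ∧ 0 < r₀ ∧ ∀ r, 0 < r → r < r₀ →
      c * (r ^ (-(d:ℝ) - 2) * (r ^ 2 * φ (r ^ (-2 : ℝ)) - φ' (r ^ (-2 : ℝ)))) ≤ j r ∧
      j r ≤ C * (r ^ (-(d:ℝ) - 2) * (r ^ 2 * φ (r ^ (-2 : ℝ)) - φ' (r ^ (-2 : ℝ)))) := by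
  have hμ : AEMeasurable μ (volume.restrict (Ioi 0)) :=
    aemeasurable_restrict_of_antitoneOn measurableSet_Ioi fun s hs t _ hst => hμdec s t hs hst
  have hμ0 (t : ℝ) (ht : t ∈ Ioi 0) : 0 ≤ μ t := (hμpos t ht).le
  simp only [← setIntegral_withDensity_ofReal measurableSet_Ioi hμ hμ0] at hφ hφ' hj
  exact sbm_jump_asymp_alpha_two_general d.cast_nonneg
    ((integrableOn_withDensity_ofReal_iff measurableSet_Ioi hμ hμ0).2 hμint) hφ hφ' hψ' hA4 hj
end
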